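/- For every ε > 0 there is a constant C_ε > 0 such that for every integer y ≥ 1 there is an integer N₀ = N_{2,y} with: for all b with gcd(b,y) = 1, every real Q ≥ 1, and every finite set F ⊂ ℤ, one has ‖ sup_{N = 2^n > N₀, Q ≤ N^{1/10}} | Hi_{N,y,Q} ∗ 1_F | ‖_{ℓ²(ℤ)} ≤ C_ε · Q^{−1+ε} · |F|^{1/2}, where the supremum is over dyadic integers N = 2^n exceeding N₀. -/

import Mathlib

open scoped ENNReal

noncomputable section

/-- `e(t) = e^{2πit}`. -/
def e2pi (t : ℝ) : ℂ := Complex.exp (2 * Real.pi * Complex.I * t)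

/-- For real `x > 0`, `M̂_x(θ) = (1/x) Σ_{0 ≤ n < x} e(-nθ)`. -/
def Mhat (x θ : ℝ) : ℂ :=
  ((1 / x : ℝ) : ℂ) * ∑ n ∈ Finset.range ⌈x⌉₊, e2pi (-(n * θ))

/-- The Gauss-type sum `Υ(a,q)`. -/
def Ups (y : ℕ) (b : ℤ) (a : ℤ) (q : ℕ) : ℂ :=
  ((Nat.totient y : ℂ) / (Nat.totient (Nat.lcm y q) : ℂ)) *
    ∑ r ∈ (Finset.Icc 1 q).filter
        (fun r : ℕ => Nat.gcd r q = 1 ∧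
          (r : ℤ) % (Nat.gcd y q : ℤ) = b % (Nat.gcd y q : ℤ)),
      e2pi (-((((r : ℤ) * a : ℤ) : ℝ) / (q : ℝ)))

/-- The Ramanujan height `h_y(q)` of `q` relative to `y`. -/
def hgt (y q : ℕ) : ℕ :=
  if 1 < Nat.gcd y q ∧ Nat.gcd y q < q ∧ 1 < Nat.gcd (Nat.gcd y q) (q / Nat.gcd y q) then 0
  else Nat.lcm y q / y

/-- The multiplier piece `L̂^{a,q}_{N,y}(ξ) = Υ(a,q) M̂_{N/ℓ}(ℓ(ξ-a/q)) χ(ℓ²(ξ-a/q))`. -/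
def Lhat (χ : ℝ → ℝ) (y : ℕ) (b : ℤ) (N : ℝ) (a q : ℕ) (ξ : ℝ) : ℂ :=
  Ups y b (a : ℤ) q *
    Mhat (N / (Nat.lcm y q : ℝ)) ((Nat.lcm y q : ℝ) * (ξ - (a : ℝ) / (q : ℝ))) *
    ((χ ((Nat.lcm y q : ℝ) ^ 2 * (ξ - (a : ℝ) / (q : ℝ))) : ℝ) : ℂ)

/-- The kernel `L^{a,q}_{N,y}(x) = ∫₀¹ L̂^{a,q}_{N,y}(ξ) e(xξ) dξ`. -/
def Lker (χ : ℝ → ℝ) (y : ℕ) (b : ℤ) (N : ℝ) (a q : ℕ) (x : ℤ) : ℂ :=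
  ∫ ξ in (0:ℝ)..1, Lhat χ y b N a q ξ * e2pi ((x : ℝ) * ξ)

/-- The High kernel `Hi_{N,y,Q} = Σ_{q : Q ≤ h_y(q) ≤ N^{1/10}} Σ_{a ∈ A_q} L^{a,q}_{N,y}`. -/
def HiK (χ : ℝ → ℝ) (y : ℕ) (b : ℤ) (N : ℕ) (Q : ℝ) (x : ℤ) : ℂ :=
  ∑ q ∈ (Finset.Icc 1 (y * ⌈(N : ℝ) ^ ((1:ℝ)/10)⌉₊)).filter
      (fun q : ℕ => Q ≤ (hgt y q : ℝ) ∧ (hgt y q : ℝ) ≤ (N : ℝ) ^ ((1:ℝ)/10)),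
    ∑ a ∈ (Finset.Icc 1 q).filter (fun a : ℕ => Nat.gcd a q = 1),
      Lker χ y b (N : ℝ) a q x

/-- `(Hi_{N,y,Q} ∗ 1_F)(x)`. -/
def HiConv (χ : ℝ → ℝ) (y : ℕ) (b : ℤ) (N : ℕ) (Q : ℝ) (F : Finset ℤ) (x : ℤ) : ℂ :=
  ∑ z ∈ F, HiK χ y b N Q (x - z)

/-- The `ℓ²(ℤ)` norm of an extended nonnegative function. -/
def l2norm (f : ℤ → ℝ≥0∞) : ℝ≥0∞ := (∑' x : ℤ, f x ^ (2 : ℝ)) ^ ((1 : ℝ) / 2)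

lemma l2norm_mono {f g : ℤ → ℝ≥0∞} (h : ∀ x, f x ≤ g x) : l2norm f ≤ l2norm g := by
  unfold l2norm
  gcongr with x
  exact h x

lemma l2norm_eq_lintegral (f : ℤ → ℝ≥0∞) :
    l2norm f = (∫⁻ x, f x ^ (2 : ℝ) ∂MeasureTheory.Measure.count) ^ ((1 : ℝ) / 2) := by
  rw [MeasureTheory.lintegral_count' (by fun_prop), l2norm]

lemma l2norm_add_le (f g : ℤ → ℝ≥0∞) :
    l2norm (fun x => f x + g x) ≤ l2norm f + l2norm g := by
  simp only [l2norm_eq_lintegral]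
  exact ENNReal.lintegral_Lp_add_le (p := 2) (measurable_of_countable f).aemeasurable
    (measurable_of_countable g).aemeasurable (by norm_num)

lemma l2norm_sum_le {ι : Type*} (s : Finset ι) (f : ι → ℤ → ℝ≥0∞) :
    l2norm (fun x => ∑ i ∈ s, f i x) ≤ ∑ i ∈ s, l2norm (f i) := by
  classical
  induction s using Finset.induction_on with
  | empty => simp [l2norm]
  | insert a s ha ih =>
    simp only [Finset.sum_insert ha]
    exact (l2norm_add_le _ _).trans (by gcongr)

lemma l2norm_iSup_le_of_monotone (f : ℕ → ℤ → ℝ≥0∞) (hf : Monotone f) {B : ℝ≥0∞}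
    (h : ∀ n, l2norm (f n) ≤ B) : l2norm (fun x => ⨆ n, f n x) ≤ B := by
  have key : ∀ g : ℤ → ℝ≥0∞, l2norm g ≤ B ↔
      ∫⁻ x, g x ^ (2 : ℝ) ∂MeasureTheory.Measure.count ≤ B ^ (2 : ℝ) := fun g => by
    rw [l2norm_eq_lintegral, one_div, ENNReal.rpow_inv_le_iff (by norm_num)]
  rw [key]
  have h1 : ∀ x, (⨆ n, f n x) ^ (2 : ℝ) = ⨆ n, f n x ^ (2 : ℝ) := fun x =>
    (ENNReal.orderIsoRpow 2 (by norm_num)).map_iSup _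
  simp_rw [h1]
  rw [MeasureTheory.lintegral_iSup (fun n => measurable_of_countable _)]
  · exact iSup_le fun n => (key _).1 (h n)
  · intro m n hmn x
    exact ENNReal.rpow_le_rpow (hf hmn x) (by norm_num)

lemma l2norm_tsum_le (f : ℕ → ℤ → ℝ≥0∞) :
    l2norm (fun x => ∑' i, f i x) ≤ ∑' i, l2norm (f i) := by
  simp_rw [ENNReal.tsum_eq_iSup_nat (f := fun i => f i _)]
  refine l2norm_iSup_le_of_monotone (fun n x => ∑ i ∈ Finset.range n, f i x) ?_ fun n => ?_
  · intro m n hmn x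
    exact Finset.sum_le_sum_of_subset (Finset.range_mono hmn)
  · exact (l2norm_sum_le _ _).trans (ENNReal.sum_le_tsum _)

/-- Fourier coefficients over `[0,1]`. -/
def fcoef (G : ℝ → ℂ) (x : ℤ) : ℂ := ∫ ξ in (0:ℝ)..1, G ξ * e2pi ((x : ℝ) * ξ)

/-- The exponential sum attached to a finite set of integers. -/
def expSum (F : Finset ℤ) (ξ : ℝ) : ℂ := ∑ z ∈ F, e2pi (-((z : ℝ) * ξ))

@[fun_prop]
lemma continuous_e2pi : Continuous e2pi := by unfold e2pi; fun_prop

lemma norm_e2pi (t : ℝ) : ‖e2pi t‖ = 1 := by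
  unfold e2pi
  rw [show (2 * Real.pi * Complex.I * t : ℂ) = ((2 * Real.pi * t : ℝ) : ℂ) * Complex.I by
    push_cast; ring]
  exact Complex.norm_exp_ofReal_mul_I _

lemma e2pi_add (s t : ℝ) : e2pi (s + t) = e2pi s * e2pi t := by
  unfold e2pi
  rw [← Complex.exp_add]; push_cast; ring_nf

lemma e2pi_int (k : ℤ) : e2pi k = 1 := by
  unfold e2pi
  rw [Complex.exp_eq_one_iff]
  exact ⟨k, by push_cast; ring⟩

lemma e2pi_zero : e2pi 0 = 1 := by simp [e2pi]

lemma e2pi_add_int (s : ℝ) (k : ℤ) : e2pi (s + k) = e2pi s := by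
  rw [e2pi_add, e2pi_int, mul_one]

@[fun_prop]
lemma continuous_expSum (F : Finset ℤ) : Continuous (expSum F) := by unfold expSum; fun_prop

/-- A measurable function that is bounded. -/
def BddMeas (G : ℝ → ℂ) : Prop := Measurable G ∧ ∃ B : ℝ, ∀ ξ, ‖G ξ‖ ≤ B

lemma BddMeas.intervalIntegrable {G : ℝ → ℂ} (h : BddMeas G) (a b : ℝ) :
    IntervalIntegrable G MeasureTheory.volume a b := by
  obtain ⟨hm, B, hB⟩ := h
  refine (intervalIntegrable_const (c := B)).mono_fun hm.aestronglyMeasurable ?_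
  exact Filter.Eventually.of_forall fun ξ => (hB ξ).trans (le_abs_self B)

lemma BddMeas.mul {G H : ℝ → ℂ} (hG : BddMeas G) (hH : BddMeas H) :
    BddMeas (fun ξ => G ξ * H ξ) := by
  obtain ⟨hm, B, hB⟩ := hG
  obtain ⟨hm', B', hB'⟩ := hH
  refine ⟨hm.mul hm', B * B', fun ξ => ?_⟩
  rw [norm_mul]
  exact mul_le_mul (hB ξ) (hB' ξ) (norm_nonneg _) ((norm_nonneg _).trans (hB ξ))

lemma BddMeas.sub {G H : ℝ → ℂ} (hG : BddMeas G) (hH : BddMeas H) :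
    BddMeas (fun ξ => G ξ - H ξ) := by
  obtain ⟨hm, B, hB⟩ := hG
  obtain ⟨hm', B', hB'⟩ := hH
  exact ⟨hm.sub hm', B + B', fun ξ => (norm_sub_le _ _).trans (add_le_add (hB ξ) (hB' ξ))⟩

lemma BddMeas.sum {ι : Type*} (s : Finset ι) {G : ι → ℝ → ℂ} (hG : ∀ i ∈ s, BddMeas (G i)) :
    BddMeas (fun ξ => ∑ i ∈ s, G i ξ) := by
  refine ⟨Finset.measurable_fun_sum s fun i hi => (hG i hi).1, ?_⟩
  choose! B hB using fun i hi => (hG i hi).2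
  exact ⟨∑ i ∈ s, B i, fun ξ => (norm_sum_le _ _).trans (Finset.sum_le_sum fun i hi => hB i hi ξ)⟩

lemma bddMeas_zero : BddMeas (fun _ => 0) := ⟨measurable_const, 0, fun _ => by simp⟩

lemma bddMeas_const (c : ℂ) : BddMeas (fun _ => c) := ⟨measurable_const, ‖c‖, fun _ => le_rfl⟩

lemma bddMeas_e2pi {f : ℝ → ℝ} (hf : Continuous f) : BddMeas (fun ξ => e2pi (f ξ)) :=
  ⟨(continuous_e2pi.comp hf).measurable, 1, fun _ => (norm_e2pi _).le⟩

lemma bddMeas_expSum (F : Finset ℤ) : BddMeas (expSum F) :=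
  BddMeas.sum F fun z _ => bddMeas_e2pi (f := fun ξ => -((z : ℝ) * ξ)) (by fun_prop)

lemma fcoef_sub {G H : ℝ → ℂ} (hG : BddMeas G) (hH : BddMeas H) (x : ℤ) :
    fcoef (fun ξ => G ξ - H ξ) x = fcoef G x - fcoef H x := by
  have he := bddMeas_e2pi (f := fun ξ => (x : ℝ) * ξ) (by fun_prop)
  unfold fcoef
  rw [← intervalIntegral.integral_sub ((hG.mul he).intervalIntegrable _ _)
    ((hH.mul he).intervalIntegrable _ _)]
  simp only [sub_mul]

lemma fcoef_sum {ι : Type*} (s : Finset ι) {G : ι → ℝ → ℂ} (hG : ∀ i ∈ s, BddMeas (G i)) (x : ℤ) :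
    fcoef (fun ξ => ∑ i ∈ s, G i ξ) x = ∑ i ∈ s, fcoef (G i) x := by
  have he := bddMeas_e2pi (f := fun ξ => (x : ℝ) * ξ) (by fun_prop)
  unfold fcoef
  rw [← intervalIntegral.integral_finsetSum fun i hi => ((hG i hi).mul he).intervalIntegrable _ _]
  simp only [Finset.sum_mul]

lemma hasSum_fcoef_sq {G : ℝ → ℂ} (hG : BddMeas G) :
    HasSum (fun x : ℤ => ‖fcoef G x‖ ^ 2) (∫ ξ in (0:ℝ)..1, ‖G ξ‖ ^ 2) := by
  have hL : MeasureTheory.MemLp G 2 (MeasureTheory.volume.restrict (Set.Ioc (0:ℝ) 1)) := by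
    obtain ⟨hm, B, hB⟩ := hG
    exact MeasureTheory.MemLp.of_bound hm.aestronglyMeasurable B
      (Filter.Eventually.of_forall hB)
  have h := hasSum_sq_fourierCoeffOn (f := G) (zero_lt_one' ℝ) hL
  simp only [sub_zero, inv_one, one_smul] at h
  rw [← (Equiv.neg ℤ).hasSum_iff] at h
  convert h using 1
  funext x
  rw [Function.comp_apply, fourierCoeffOn_eq_integral]
  congr 2
  simp only [sub_zero, div_one, one_smul, fcoef]
  refine intervalIntegral.integral_congr fun ξ _ => ?_
  simp only [fourier_coe_apply, e2pi, smul_eq_mul, Equiv.neg_apply, neg_neg]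
  rw [mul_comm]; congr 2; push_cast; ring

lemma tsum_fcoef_sq_le {G : ℝ → ℂ} (hG : BddMeas G) :
    ∑' x : ℤ, ‖fcoef G x‖ₑ ^ (2:ℝ) = ∫⁻ ξ in Set.Ioc (0:ℝ) 1, ‖G ξ‖ₑ ^ (2:ℝ) := by
  have h := hasSum_fcoef_sq hG
  have e : ∀ z : ℂ, ‖z‖ₑ ^ (2:ℝ) = ENNReal.ofReal (‖z‖ ^ 2) := fun z => by
    rw [ENNReal.rpow_ofNat, ENNReal.ofReal_pow (norm_nonneg _), ofReal_norm]
  simp only [e]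
  rw [← ENNReal.ofReal_tsum_of_nonneg (fun _ => by positivity) h.summable, h.tsum_eq,
    intervalIntegral.integral_of_le zero_le_one,
    MeasureTheory.ofReal_integral_eq_lintegral_ofReal]
  · have := (hG.mul hG).intervalIntegrable 0 1
    rw [intervalIntegrable_iff_integrableOn_Ioc_of_le zero_le_one] at this
    refine this.norm.congr (Filter.Eventually.of_forall fun ξ => ?_)
    simp [pow_two]
  · exact Filter.Eventually.of_forall fun ξ => by positivity

lemma fcoef_expSum (F : Finset ℤ) (x : ℤ) : fcoef (expSum F) x = if x ∈ F then 1 else 0 := by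
  unfold expSum
  rw [fcoef_sum F fun z _ => bddMeas_e2pi (f := fun ξ => -((z : ℝ) * ξ)) (by fun_prop)]
  have h : ∀ z ∈ F, fcoef (fun ξ => e2pi (-((z : ℝ) * ξ))) x = if z = x then 1 else 0 := by
    intro z _
    unfold fcoef
    simp only [← e2pi_add]
    split_ifs with hz
    · subst hz; simp [e2pi_zero]
    · have hc : (2 * Real.pi * Complex.I * ((x - z : ℤ) : ℂ)) ≠ 0 := by
        have : ((x - z : ℤ) : ℂ) ≠ 0 := by exact_mod_cast sub_ne_zero.2 (Ne.symm hz)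
        have := Complex.two_pi_I_ne_zero
        positivity
      have : ∀ ξ : ℝ, e2pi (-(z * ξ) + x * ξ)
          = Complex.exp ((2 * Real.pi * Complex.I * ((x - z : ℤ) : ℂ)) * ξ) := fun ξ => by
        unfold e2pi; congr 1; push_cast; ring
      simp only [this]
      rw [integral_exp_mul_complex hc]
      have h1 := e2pi_int (x - z)
      unfold e2pi at h1
      push_cast at h1 ⊢
      simp [h1]
  rw [Finset.sum_congr rfl h]
  simp

lemma lintegral_expSum (F : Finset ℤ) :
    ∫⁻ ξ in Set.Ioc (0:ℝ) 1, ‖expSum F ξ‖ₑ ^ (2:ℝ) = F.card := by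
  rw [← tsum_fcoef_sq_le (bddMeas_expSum F)]
  simp only [fcoef_expSum]
  rw [tsum_eq_sum (s := F) (fun x hx => by simp [hx])]
  rw [Finset.sum_congr rfl (g := fun _ => (1 : ℝ≥0∞)) fun x hx => by simp [hx]]
  simp

lemma l2norm_le_iff (g : ℤ → ℝ≥0∞) (B : ℝ≥0∞) :
    l2norm g ≤ B ↔ ∑' x, g x ^ (2 : ℝ) ≤ B ^ (2 : ℝ) := by
  rw [l2norm, one_div, ENNReal.rpow_inv_le_iff (by norm_num)]

lemma le_rpow_half_tsum (f : ℕ → ℝ≥0∞) (n : ℕ) :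
    f n ≤ (∑' k, f k ^ (2 : ℝ)) ^ ((1 : ℝ) / 2) := by
  rw [one_div, ENNReal.le_rpow_inv_iff (by norm_num)]
  exact ENNReal.le_tsum (f := fun k => f k ^ (2 : ℝ)) n

/-- The square function of a sequence of multipliers with a uniformly square-summable symbol. -/
lemma l2norm_squareFunction_le (F : Finset ℤ) (d : ℕ → ℝ → ℂ) (hd : ∀ n, BddMeas (d n))
    (B : ℝ≥0∞) (h : ∀ ξ, ∑' n, ‖d n ξ‖ₑ ^ (2 : ℝ) ≤ B ^ (2 : ℝ)) :
    l2norm (fun x => (∑' n, ‖fcoef (fun ξ => d n ξ * expSum F ξ) x‖ₑ ^ (2 : ℝ)) ^ ((1 : ℝ) / 2)) ≤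
      B * (F.card : ℝ≥0∞) ^ ((1 : ℝ) / 2) := by
  rw [l2norm_le_iff]
  have e : ∀ a : ℝ≥0∞, (a ^ ((1 : ℝ) / 2)) ^ (2 : ℝ) = a := fun a => by
    rw [← ENNReal.rpow_mul]; norm_num
  simp only [e]
  rw [ENNReal.tsum_comm, ENNReal.mul_rpow_of_nonneg _ _ (by norm_num), e]
  have h1 : ∀ n, ∑' x, ‖fcoef (fun ξ => d n ξ * expSum F ξ) x‖ₑ ^ (2 : ℝ)
      = ∫⁻ ξ in Set.Ioc (0 : ℝ) 1, ‖d n ξ‖ₑ ^ (2 : ℝ) * ‖expSum F ξ‖ₑ ^ (2 : ℝ) := fun n => by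
    rw [tsum_fcoef_sq_le ((hd n).mul (bddMeas_expSum F))]
    simp only [enorm_mul, ENNReal.mul_rpow_of_nonneg _ _ (show (0 : ℝ) ≤ 2 by norm_num)]
  simp only [h1]
  rw [← MeasureTheory.lintegral_tsum]
  · simp only [ENNReal.tsum_mul_right]
    calc _ ≤ ∫⁻ ξ in Set.Ioc (0 : ℝ) 1, B ^ (2 : ℝ) * ‖expSum F ξ‖ₑ ^ (2 : ℝ) := by
          gcongr with ξ; exact h ξ
      _ = _ := by
          rw [MeasureTheory.lintegral_const_mul _
            ((continuous_expSum F).measurable.enorm.pow_const _), lintegral_expSum]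
  · intro n
    exact (((hd n).1.enorm.pow_const _).mul
      ((continuous_expSum F).measurable.enorm.pow_const _)).aemeasurable

lemma tsum_sq_le_sq_tsum (f : ℕ → ℝ≥0∞) : ∑' n, f n ^ (2 : ℝ) ≤ (∑' n, f n) ^ (2 : ℝ) := by
  simp only [ENNReal.rpow_two, pow_two]
  rw [← ENNReal.tsum_mul_right]
  exact ENNReal.tsum_le_tsum fun n => by gcongr; exact ENNReal.le_tsum n

lemma l2norm_iSup_fcoef_le (F : Finset ℤ) (d : ℕ → ℝ → ℂ) (hd : ∀ n, BddMeas (d n))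
    (B : ℝ≥0∞) (h : ∀ ξ, ∑' n, ‖d n ξ‖ₑ ≤ B) :
    l2norm (fun x => ⨆ n, ‖fcoef (fun ξ => d n ξ * expSum F ξ) x‖ₑ) ≤
      B * (F.card : ℝ≥0∞) ^ ((1 : ℝ) / 2) := by
  refine le_trans (l2norm_mono fun x => iSup_le fun n => ?_)
    (l2norm_squareFunction_le F d hd B fun ξ => (tsum_sq_le_sq_tsum _).trans ?_)
  · exact le_rpow_half_tsum (fun n => ‖fcoef (fun ξ => d n ξ * expSum F ξ) x‖ₑ) n
  · gcongr; exact h ξ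

lemma l2norm_fcoef_le (F : Finset ℤ) (d : ℝ → ℂ) (hd : BddMeas d)
    (B : ℝ≥0∞) (h : ∀ ξ, ‖d ξ‖ₑ ≤ B) :
    l2norm (fun x => ‖fcoef (fun ξ => d ξ * expSum F ξ) x‖ₑ) ≤
      B * (F.card : ℝ≥0∞) ^ ((1 : ℝ) / 2) := by
  refine le_trans (l2norm_mono fun x => ?_) (l2norm_iSup_fcoef_le F
    (fun n ξ => if n = 0 then d ξ else 0) (fun n => ?_) B fun ξ => ?_)
  · exact le_iSup_of_le 0 (by simp)
  · by_cases hn : n = 0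
    · simpa [hn] using hd
    · simpa [hn] using bddMeas_zero
  · rw [tsum_eq_single 0 (by intro n hn; simp [hn])]
    simpa using h ξ

/-- The Rademacher–Menshov inequality for `2 ^ s` terms. -/
lemma enorm_le_sum_dyadic_square (s : ℕ) : ∀ (b : ℕ → ℂ) (n : ℕ), n < 2 ^ s →
    ‖b n‖ₑ ≤ ‖b 0‖ₑ + ∑ i ∈ Finset.range s,
      (∑' k, ‖b ((k + 1) * 2 ^ i) - b (k * 2 ^ i)‖ₑ ^ (2 : ℝ)) ^ ((1 : ℝ) / 2) := by
  induction s with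
  | zero => intro b n hn; simp at hn; simp [hn]
  | succ s ih =>
    intro b n hn
    have h := ih (fun k => b (2 * k)) (n / 2) (by omega)
    rw [Finset.sum_range_succ']
    have h2 : ‖b n‖ₑ ≤ ‖b (2 * (n / 2))‖ₑ +
        (∑' k, ‖b ((k + 1) * 2 ^ 0) - b (k * 2 ^ 0)‖ₑ ^ (2 : ℝ)) ^ ((1 : ℝ) / 2) := by
      rcases Nat.even_or_odd' n with ⟨m, rfl | rfl⟩
      · simp
      · have e : (2 * m + 1) / 2 = m := by omega
        rw [e]
        calc ‖b (2 * m + 1)‖ₑ = ‖b (2 * m) + (b (2 * m + 1) - b (2 * m))‖ₑ := by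
              congr 1; ring
          _ ≤ ‖b (2 * m)‖ₑ + ‖b (2 * m + 1) - b (2 * m)‖ₑ := enorm_add_le _ _
          _ ≤ _ := by
              gcongr
              simpa using le_rpow_half_tsum (fun k => ‖b (k + 1) - b k‖ₑ) (2 * m)
    refine h2.trans ?_
    rw [← add_assoc]
    gcongr
    refine h.trans (le_of_eq ?_)
    congr 2 with i
    congr 2 with k
    rw [show 2 * ((k + 1) * 2 ^ i) = (k + 1) * 2 ^ (i + 1) by ring,
      show 2 * (k * 2 ^ i) = k * 2 ^ (i + 1) by ring]

lemma enorm_sub_le_sum_range (m : ℕ → ℂ) (a : ℕ) (l : ℕ) :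
    ‖m (a + l) - m a‖ₑ ≤ ∑ j ∈ Finset.range l, ‖m (a + j + 1) - m (a + j)‖ₑ := by
  induction l with
  | zero => simp
  | succ l ih =>
    rw [Finset.sum_range_succ]
    calc ‖m (a + (l + 1)) - m a‖ₑ
        = ‖(m (a + l) - m a) + (m (a + l + 1) - m (a + l))‖ₑ := by congr 1; rw [← add_assoc]; ring
      _ ≤ _ := (enorm_add_le _ _).trans (by gcongr)

lemma tsum_enorm_sub_mul_le (m : ℕ → ℂ) (l : ℕ) :
    ∑' k, ‖m ((k + 1) * l) - m (k * l)‖ₑ ≤ ∑' n, ‖m (n + 1) - m n‖ₑ := by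
  rw [ENNReal.tsum_eq_iSup_nat]
  refine iSup_le fun N => ?_
  have h : ∑ k ∈ Finset.range N, ‖m ((k + 1) * l) - m (k * l)‖ₑ
      ≤ ∑ n ∈ Finset.range (N * l), ‖m (n + 1) - m n‖ₑ := by
    induction N with
    | zero => simp
    | succ N ih =>
      rw [Finset.sum_range_succ, add_mul, one_mul, Finset.sum_range_add]
      refine add_le_add ih ?_
      exact enorm_sub_le_sum_range m (N * l) l
  exact h.trans (ENNReal.sum_le_tsum _)

lemma l2norm_rademacher_menshov (F : Finset ℤ) (m : ℕ → ℝ → ℂ) (hm : ∀ n, BddMeas (m n))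
    (B : ℝ≥0∞) (h0 : ∀ ξ, ‖m 0 ξ‖ₑ ≤ B) (h : ∀ ξ, ∑' n, ‖m (n + 1) ξ - m n ξ‖ₑ ≤ B) (s : ℕ) :
    l2norm (fun x => ⨆ (n : ℕ) (_ : n < 2 ^ s), ‖fcoef (fun ξ => m n ξ * expSum F ξ) x‖ₑ) ≤
      (s + 1) * (B * (F.card : ℝ≥0∞) ^ ((1 : ℝ) / 2)) := by
  have hs : ∀ (a b : ℕ) (x : ℤ), fcoef (fun ξ => m a ξ * expSum F ξ) x
      - fcoef (fun ξ => m b ξ * expSum F ξ) x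
      = fcoef (fun ξ => (m a ξ - m b ξ) * expSum F ξ) x := fun a b x => by
    rw [← fcoef_sub ((hm a).mul (bddMeas_expSum F)) ((hm b).mul (bddMeas_expSum F))]
    simp only [sub_mul]
  refine le_trans (l2norm_mono fun x => iSup₂_le fun n hn =>
    enorm_le_sum_dyadic_square s (fun n => fcoef (fun ξ => m n ξ * expSum F ξ) x) n hn) ?_
  simp only [hs]
  refine (l2norm_add_le _ _).trans ?_
  rw [add_mul, one_mul, add_comm]
  refine add_le_add ((l2norm_sum_le _ _).trans ?_) (l2norm_fcoef_le F _ (hm 0) B h0)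
  refine (Finset.sum_le_card_nsmul _ _ (B * (F.card : ℝ≥0∞) ^ ((1 : ℝ) / 2)) fun i _ => ?_).trans
    (by simp)
  refine l2norm_squareFunction_le F
    (fun k ξ => m ((k + 1) * 2 ^ i) ξ - m (k * 2 ^ i) ξ) (fun k => (hm _).sub (hm _)) B fun ξ => ?_
  refine (tsum_sq_le_sq_tsum _).trans ?_
  gcongr
  exact (tsum_enorm_sub_mul_le (fun n => m n ξ) (2 ^ i)).trans (h ξ)

open Classical in
/-- The kernel of the symmetric average of length `N` along multiples of `D`. -/
def hlKer (D : ℤ) (N : ℕ) (x z : ℤ) : ℝ :=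
  if ∃ i : ℤ, |i| < N ∧ z = x + D * i then (1 : ℝ) / N else 0

lemma hlKer_nonneg (D : ℤ) (N : ℕ) (x z : ℤ) : 0 ≤ hlKer D N x z := by
  unfold hlKer; split_ifs <;> positivity

lemma exists_of_hlKer_ne_zero {D : ℤ} {N : ℕ} {x z : ℤ} (h : hlKer D N x z ≠ 0) :
    ∃ i : ℤ, |i| < N ∧ z = x + D * i := by
  by_contra h0
  exact h (if_neg h0)

lemma hlKer_le (D : ℤ) (N : ℕ) (x z : ℤ) : hlKer D N x z ≤ 1 / N := by
  unfold hlKer; split_ifs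
  · exact le_rfl
  · positivity

lemma sum_hlKer_le (D : ℤ) {N : ℕ} (hN : 1 ≤ N) (x : ℤ) (Z : Finset ℤ) :
    ∑ z ∈ Z, hlKer D N x z ≤ 2 := by
  classical
  unfold hlKer
  rw [← Finset.sum_filter, Finset.sum_const, nsmul_eq_mul]
  have h : (Z.filter fun z => ∃ i : ℤ, |i| < N ∧ z = x + D * i)
      ⊆ (Finset.Ioo (-(N : ℤ)) N).image fun i => x + D * i := by
    intro z hz
    obtain ⟨-, i, hi, rfl⟩ := Finset.mem_filter.1 hz
    exact Finset.mem_image.2 ⟨i, Finset.mem_Ioo.2 (abs_lt.1 hi), rfl⟩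
  have h2 := (Finset.card_le_card h).trans Finset.card_image_le
  rw [Int.card_Ioo] at h2
  have h3 : (Z.filter fun z => ∃ i : ℤ, |i| < N ∧ z = x + D * i).card ≤ 2 * N := by omega
  have h4 : ((Z.filter fun z => ∃ i : ℤ, |i| < N ∧ z = x + D * i).card : ℝ) ≤ 2 * N := by
    exact_mod_cast h3
  have : (0 : ℝ) < N := by exact_mod_cast hN
  rw [mul_one_div, div_le_iff₀ this]
  exact h4

lemma sum_hlKer_mul_le_of_le (D : ℤ) {N N' : ℕ} (hN' : 1 ≤ N') (hNN : N' ≤ N)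
    (x x' : ℤ) (Z : Finset ℤ) :
    ∑ z ∈ Z, hlKer D N x z * hlKer D N' x' z ≤ 4 * hlKer D (2 * N) x x' := by
  by_cases h : ∃ i : ℤ, |i| < ((2 * N : ℕ) : ℤ) ∧ x' = x + D * i
  · have e : hlKer D (2 * N) x x' = 1 / ((2 * N : ℕ) : ℝ) := by unfold hlKer; rw [if_pos h]
    rw [e]
    calc _ ≤ ∑ z ∈ Z, (1 / (N : ℝ)) * hlKer D N' x' z := by
          gcongr with z
          · exact hlKer_nonneg _ _ _ _
          · exact hlKer_le _ _ _ _
      _ = (1 / (N : ℝ)) * ∑ z ∈ Z, hlKer D N' x' z := by rw [Finset.mul_sum]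
      _ ≤ (1 / (N : ℝ)) * 2 := by gcongr; exact sum_hlKer_le D hN' x' Z
      _ = _ := by
          have : (N : ℝ) ≠ 0 := by have : 1 ≤ N := hN'.trans hNN
                                   positivity
          push_cast; field_simp; norm_num
  · refine (Finset.sum_eq_zero fun z _ => ?_).trans_le
      (mul_nonneg (by norm_num) (hlKer_nonneg _ _ _ _))
    by_contra h0
    obtain ⟨h1, h2⟩ := mul_ne_zero_iff.1 h0
    obtain ⟨i, hi, hz⟩ := exists_of_hlKer_ne_zero h1
    obtain ⟨j, hj, hz'⟩ := exists_of_hlKer_ne_zero h2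
    refine h ⟨i - j, ?_, by linarith⟩
    rw [abs_lt] at *
    push_cast
    omega

lemma sum_hlKer_mul_le (D : ℤ) {N N' : ℕ} (hN : 1 ≤ N) (hN' : 1 ≤ N')
    (x x' : ℤ) (Z : Finset ℤ) :
    ∑ z ∈ Z, hlKer D N x z * hlKer D N' x' z ≤
      4 * (hlKer D (2 * N) x x' + hlKer D (2 * N') x' x) := by
  rcases le_total N' N with h | h
  · have := sum_hlKer_mul_le_of_le D hN' h x x' Z
    linarith [hlKer_nonneg D (2 * N') x' x]
  · have := sum_hlKer_mul_le_of_le D hN h x' x Z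
    simp only [mul_comm] at this ⊢
    linarith [hlKer_nonneg D (2 * N) x x', hlKer_nonneg D (N * 2) x x']

/-- The linearized maximal averages are bounded on `ℓ²`, with squared constant `c`, at the
points of `S`. -/
def HLBound (D : ℤ) (S : Finset ℤ) (c : ℝ) : Prop :=
  ∀ (N : ℤ → ℕ), (∀ x, 1 ≤ N x) → ∀ (Z : Finset ℤ) (f : ℤ → ℝ), (∀ z, 0 ≤ f z) →
    ∑ x ∈ S, (∑ z ∈ Z, hlKer D (N x) x z * f z) ^ 2 ≤ c * ∑ z ∈ Z, f z ^ 2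

lemma hlBound_trivial (D : ℤ) (S : Finset ℤ) : HLBound D S (2 * S.card) := by
  intro N hN Z f hf
  have h : ∀ x ∈ S, (∑ z ∈ Z, hlKer D (N x) x z * f z) ^ 2 ≤ 2 * ∑ z ∈ Z, f z ^ 2 := by
    intro x _
    refine (Finset.sum_mul_sq_le_sq_mul_sq Z _ _).trans ?_
    gcongr
    refine le_trans (Finset.sum_le_sum fun z _ => ?_) (sum_hlKer_le D (hN x) x Z)
    rw [pow_two]
    refine mul_le_of_le_one_left (hlKer_nonneg _ _ _ _) ((hlKer_le _ _ _ _).trans ?_)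
    have : (1 : ℝ) ≤ N x := by exact_mod_cast hN x
    rw [div_le_one (by linarith)]; exact this
  refine (Finset.sum_le_card_nsmul _ _ _ h).trans (le_of_eq ?_)
  rw [nsmul_eq_mul]; ring

lemma HLBound.improve {D : ℤ} {S : Finset ℤ} {c : ℝ} (hc : 0 ≤ c) (h : HLBound D S c) :
    HLBound D S (8 * √c) := by
  intro N hN Z f hf
  set a : ℤ → ℝ := fun x => ∑ z ∈ Z, hlKer D (N x) x z * f z with ha
  have ha0 : ∀ x, 0 ≤ a x := fun x =>
    Finset.sum_nonneg fun z _ => mul_nonneg (hlKer_nonneg _ _ _ _) (hf z)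
  set A := ∑ x ∈ S, a x ^ 2 with hA
  have hA0 : 0 ≤ A := Finset.sum_nonneg fun x _ => sq_nonneg _
  set u : ℤ → ℝ := fun z => ∑ x ∈ S, a x * hlKer D (N x) x z with hu
  have h1 : A = ∑ z ∈ Z, f z * u z := by
    simp only [hA, hu, Finset.mul_sum]
    rw [Finset.sum_comm]
    refine Finset.sum_congr rfl fun x _ => ?_
    rw [pow_two]
    nth_rw 2 [ha]
    simp only [Finset.mul_sum]
    exact Finset.sum_congr rfl fun z _ => by ring
  have h2 : A ^ 2 ≤ (∑ z ∈ Z, f z ^ 2) * ∑ z ∈ Z, u z ^ 2 := by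
    rw [h1]; exact Finset.sum_mul_sq_le_sq_mul_sq Z _ _
  have h3 : ∑ x ∈ S, a x * ∑ x' ∈ S, hlKer D (2 * N x) x x' * a x' ≤ √c * A := by
    have hb := h (fun x => 2 * N x) (fun x => by have := hN x; omega) S a ha0
    have hcs := Finset.sum_mul_sq_le_sq_mul_sq S a
      (fun x => ∑ x' ∈ S, hlKer D (2 * N x) x x' * a x')
    refine abs_le_of_sq_le_sq' ?_ (by positivity) |>.2
    refine hcs.trans ?_
    rw [mul_pow, Real.sq_sqrt hc]
    calc _ ≤ A * (c * A) := mul_le_mul_of_nonneg_left hb hA0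
      _ = _ := by ring
  have h4 : ∑ z ∈ Z, u z ^ 2 ≤ 8 * √c * A := by
    have e : ∑ z ∈ Z, u z ^ 2
        = ∑ x ∈ S, ∑ x' ∈ S, a x * a x' * ∑ z ∈ Z, hlKer D (N x) x z * hlKer D (N x') x' z := by
      simp only [hu, pow_two, Finset.sum_mul_sum]
      simp only [Finset.mul_sum]
      rw [Finset.sum_comm]
      refine Finset.sum_congr rfl fun x _ => ?_
      rw [Finset.sum_comm]
      exact Finset.sum_congr rfl fun x' _ => Finset.sum_congr rfl fun z _ => by ring
    rw [e]
    calc _ ≤ ∑ x ∈ S, ∑ x' ∈ S, a x * a x' *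
          (4 * (hlKer D (2 * N x) x x' + hlKer D (2 * N x') x' x)) := by
          gcongr with x _ x' _
          · exact mul_nonneg (ha0 x) (ha0 x')
          · exact sum_hlKer_mul_le D (hN x) (hN x') x x' Z
      _ = 4 * (∑ x ∈ S, ∑ x' ∈ S, a x * a x' * hlKer D (2 * N x) x x')
          + 4 * (∑ x ∈ S, ∑ x' ∈ S, a x * a x' * hlKer D (2 * N x') x' x) := by
          simp only [Finset.mul_sum, ← Finset.sum_add_distrib]
          exact Finset.sum_congr rfl fun x _ => Finset.sum_congr rfl fun x' _ => by ring
      _ = 8 * ∑ x ∈ S, a x * ∑ x' ∈ S, hlKer D (2 * N x) x x' * a x' := by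
          have e1 : ∑ x ∈ S, ∑ x' ∈ S, a x * a x' * hlKer D (2 * N x') x' x
              = ∑ x ∈ S, ∑ x' ∈ S, a x * a x' * hlKer D (2 * N x) x x' := by
            rw [Finset.sum_comm]
            exact Finset.sum_congr rfl fun x _ => Finset.sum_congr rfl fun x' _ => by ring
          have e2 : ∑ x ∈ S, a x * ∑ x' ∈ S, hlKer D (2 * N x) x x' * a x'
              = ∑ x ∈ S, ∑ x' ∈ S, a x * a x' * hlKer D (2 * N x) x x' := by
            simp only [Finset.mul_sum]
            exact Finset.sum_congr rfl fun x _ => Finset.sum_congr rfl fun x' _ => by ring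
          rw [e1, e2]; ring
      _ ≤ 8 * (√c * A) := by gcongr
      _ = _ := by ring
  have hf2 : 0 ≤ ∑ z ∈ Z, f z ^ 2 := Finset.sum_nonneg fun z _ => sq_nonneg _
  have h5 : A ^ 2 ≤ (∑ z ∈ Z, f z ^ 2) * (8 * √c * A) :=
    h2.trans (mul_le_mul_of_nonneg_left h4 hf2)
  rcases hA0.eq_or_lt with h0 | h0
  · rw [← h0]; positivity
  · refine le_of_mul_le_mul_right ?_ h0
    linarith

lemma hlBound_81 (D : ℤ) (S : Finset ℤ) : HLBound D S 81 := by
  set T : Set ℝ := {c | 0 ≤ c ∧ HLBound D S c} with hT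
  have hne : T.Nonempty := ⟨2 * S.card, by positivity, hlBound_trivial D S⟩
  have hbd : BddBelow T := ⟨0, fun c hc => hc.1⟩
  have hI0 : 0 ≤ sInf T := le_csInf hne fun c hc => hc.1
  have h1 : ∀ c ∈ T, sInf T ^ 2 / 64 ≤ c := by
    intro c hc
    have : sInf T ≤ 8 * √c := csInf_le hbd ⟨by positivity, hc.2.improve hc.1⟩
    have h2 : sInf T ^ 2 ≤ (8 * √c) ^ 2 := by gcongr
    rw [mul_pow, Real.sq_sqrt hc.1] at h2
    linarith
  have h2 : sInf T ^ 2 / 64 ≤ sInf T := le_csInf hne h1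
  have h3 : sInf T < 81 := by nlinarith
  obtain ⟨c, hc, hc81⟩ := exists_lt_of_csInf_lt hne h3
  intro N hN Z f hf
  refine (hc.2 N hN Z f hf).trans ?_
  gcongr

lemma sum_range_div_le_hlKer {D : ℤ} (hD : D ≠ 0) {M : ℕ} (g : ℤ → ℝ) (hg : ∀ z, 0 ≤ g z)
    (x : ℤ) (Z : Finset ℤ) (hZ : ∀ i < M, x - D * i ∈ Z) :
    (∑ i ∈ Finset.range M, g (x - D * i)) / M ≤ ∑ z ∈ Z, hlKer D M x z * g z := by
  classical
  have hinj : Set.InjOn (fun i : ℕ => x - D * i) (Finset.range M) := by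
    intro i _ j _ hij
    have : D * (i : ℤ) = D * j := by simpa using hij
    exact_mod_cast mul_left_cancel₀ hD this
  have hsub : (Finset.range M).image (fun i : ℕ => x - D * i) ⊆ Z := by
    intro z hz
    obtain ⟨i, hi, rfl⟩ := Finset.mem_image.1 hz
    exact hZ i (Finset.mem_range.1 hi)
  refine le_trans (le_of_eq ?_) (Finset.sum_le_sum_of_subset_of_nonneg hsub
    fun z _ _ => mul_nonneg (hlKer_nonneg _ _ _ _) (hg z))
  rw [Finset.sum_image hinj, Finset.sum_div]
  refine Finset.sum_congr rfl fun i hi => ?_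
  have h : ∃ j : ℤ, |j| < M ∧ x - D * (i : ℤ) = x + D * j :=
    ⟨-i, by simpa using Finset.mem_range.1 hi, by ring⟩
  rw [hlKer, if_pos h]
  ring

lemma l2norm_iSup_average_le {D : ℤ} (hD : D ≠ 0) (M : ℕ → ℕ) (hM : ∀ n, 1 ≤ M n)
    (g : ℤ → ℝ) (hg : ∀ z, 0 ≤ g z) :
    l2norm (fun x => ⨆ n, ENNReal.ofReal ((∑ i ∈ Finset.range (M n), g (x - D * i)) / M n)) ≤
      9 * l2norm (fun z => ENNReal.ofReal (g z)) := by
  classical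
  set A : ℕ → ℤ → ℝ := fun n x => (∑ i ∈ Finset.range (M n), g (x - D * i)) / M n with hA
  have hA0 : ∀ n x, 0 ≤ A n x := fun n x =>
    div_nonneg (Finset.sum_nonneg fun i _ => hg _) (Nat.cast_nonneg _)
  have e : ∀ x, (⨆ n, ENNReal.ofReal (A n x))
      = ⨆ k, (Finset.range (k + 1)).sup fun n => ENNReal.ofReal (A n x) := by
    intro x
    refine le_antisymm (iSup_le fun n => le_iSup_of_le n ?_)
      (iSup_le fun k => Finset.sup_le fun n _ => le_iSup (fun n => ENNReal.ofReal (A n x)) n)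
    exact Finset.le_sup (f := fun n => ENNReal.ofReal (A n x)) (Finset.self_mem_range_succ n)
  refine (l2norm_mono fun x => (e x).le).trans ?_
  refine l2norm_iSup_le_of_monotone
    (fun k x => (Finset.range (k + 1)).sup fun n => ENNReal.ofReal (A n x)) ?_ fun k => ?_
  · intro k l hkl x
    exact Finset.sup_mono (Finset.range_mono (by omega))
  rw [l2norm_le_iff, ENNReal.mul_rpow_of_nonneg _ _ (by norm_num)]
  have e2 : l2norm (fun z => ENNReal.ofReal (g z)) ^ (2 : ℝ)
      = ∑' z, ENNReal.ofReal (g z) ^ (2 : ℝ) := by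
    rw [l2norm, ← ENNReal.rpow_mul]; norm_num
  rw [e2, ENNReal.tsum_eq_iSup_sum]
  refine iSup_le fun S => ?_
  have hch : ∀ x, ∃ n, ((Finset.range (k + 1)).sup fun n => ENNReal.ofReal (A n x))
      = ENNReal.ofReal (A n x) := fun x => by
    obtain ⟨n, -, hn⟩ := Finset.exists_mem_eq_sup (Finset.range (k + 1)) ⟨0, by simp⟩
      fun n => ENNReal.ofReal (A n x)
    exact ⟨n, hn⟩
  choose ν hν using hch
  simp only [hν]
  set Z : Finset ℤ := S.biUnion fun x => (Finset.range (M (ν x))).image fun i : ℕ => x - D * i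
  have hb := hlBound_81 D S (fun x => M (ν x)) (fun x => hM _) Z g hg
  have e3 : ∀ t : ℝ, 0 ≤ t → ENNReal.ofReal t ^ (2 : ℝ) = ENNReal.ofReal (t ^ 2) := fun t ht => by
    rw [ENNReal.rpow_ofNat, ENNReal.ofReal_pow ht]
  calc ∑ x ∈ S, ENNReal.ofReal (A (ν x) x) ^ (2 : ℝ)
      = ENNReal.ofReal (∑ x ∈ S, A (ν x) x ^ 2) := by
        rw [ENNReal.ofReal_sum_of_nonneg fun x _ => sq_nonneg _]
        exact Finset.sum_congr rfl fun x _ => e3 _ (hA0 _ _)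
    _ ≤ ENNReal.ofReal (81 * ∑ z ∈ Z, g z ^ 2) := by
        refine ENNReal.ofReal_le_ofReal (le_trans (Finset.sum_le_sum fun x hx => ?_) hb)
        refine pow_le_pow_left₀ (hA0 _ _) (sum_range_div_le_hlKer hD g hg x Z fun i hi => ?_) 2
        exact Finset.mem_biUnion.2 ⟨x, hx, Finset.mem_image.2 ⟨i, Finset.mem_range.2 hi, rfl⟩⟩
    _ = 9 ^ (2 : ℝ) * ∑ z ∈ Z, ENNReal.ofReal (g z) ^ (2 : ℝ) := by
        rw [ENNReal.ofReal_mul (by norm_num), ENNReal.ofReal_sum_of_nonneg fun x _ => sq_nonneg _,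
          Finset.sum_congr rfl fun z _ => e3 (g z) (hg z)]
        congr 1
        norm_num
    _ ≤ _ := by gcongr; exact ENNReal.sum_le_tsum _

@[fun_prop]
lemma continuous_Mhat (x : ℝ) : Continuous (Mhat x) := by unfold Mhat; fun_prop

lemma natCeil_le_two_mul {x : ℝ} (hx : 1 ≤ x) : (⌈x⌉₊ : ℝ) ≤ 2 * x := by
  have := (Nat.ceil_lt_add_one (zero_le_one.trans hx)).le
  linarith

lemma norm_Mhat_le {x : ℝ} (hx : 1 ≤ x) (θ : ℝ) : ‖Mhat x θ‖ ≤ 2 := by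
  unfold Mhat
  rw [norm_mul, Complex.norm_real, Real.norm_of_nonneg (by positivity)]
  have h : ‖∑ n ∈ Finset.range ⌈x⌉₊, e2pi (-(n * θ))‖ ≤ ⌈x⌉₊ := by
    refine (norm_sum_le _ _).trans ?_
    simp [norm_e2pi]
  have hx0 : 0 < x := by linarith
  calc _ ≤ 1 / x * (2 * x) := by gcongr; exact h.trans (natCeil_le_two_mul hx)
    _ = 2 := by field_simp

lemma bddMeas_Mhat {x : ℝ} (hx : 1 ≤ x) {f : ℝ → ℝ} (hf : Continuous f) :
    BddMeas (fun ξ => Mhat x (f ξ)) :=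
  ⟨((continuous_Mhat x).comp hf).measurable, 2, fun _ => norm_Mhat_le hx _⟩

lemma fcoef_Mhat_mul {x : ℝ} (D : ℕ) {G : ℝ → ℂ} (hG : BddMeas G) (z : ℤ) :
    fcoef (fun ξ => Mhat x (D * ξ) * G ξ) z =
      ((1 / x : ℝ) : ℂ) * ∑ n ∈ Finset.range ⌈x⌉₊, fcoef G (z - (D : ℤ) * n) := by
  have e : ∀ ξ, Mhat x (D * ξ) * G ξ = ∑ n ∈ Finset.range ⌈x⌉₊,
      (((1 / x : ℝ) : ℂ) * e2pi (-(n * (D * ξ)))) * G ξ := fun ξ => by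
    rw [Mhat, mul_assoc, Finset.sum_mul, Finset.mul_sum]
    simp only [mul_assoc]
  simp only [e]
  have hb : ∀ n ∈ Finset.range ⌈x⌉₊, BddMeas fun ξ =>
      (((1 / x : ℝ) : ℂ) * e2pi (-(n * (D * ξ)))) * G ξ := fun n _ => ((bddMeas_const _).mul
    (bddMeas_e2pi (f := fun ξ => -((n : ℝ) * (D * ξ))) (by fun_prop))).mul hG
  rw [fcoef_sum _ hb, Finset.mul_sum]
  refine Finset.sum_congr rfl fun n _ => ?_
  unfold fcoef
  rw [← intervalIntegral.integral_const_mul]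
  refine intervalIntegral.integral_congr fun ξ _ => ?_
  have h : e2pi (((z - (D : ℤ) * n : ℤ) : ℝ) * ξ) = e2pi (-(n * (D * ξ))) * e2pi (z * ξ) := by
    rw [← e2pi_add]; congr 1; push_cast; ring
  simp only [h]
  ring

lemma l2norm_iSup_fcoef_Mhat_le {D : ℕ} (hD : 1 ≤ D) (X : ℕ → ℝ) (hX : ∀ n, 1 ≤ X n)
    {G : ℝ → ℂ} (hG : BddMeas G) :
    l2norm (fun z => ⨆ n, ‖fcoef (fun ξ => Mhat (X n) (D * ξ) * G ξ) z‖ₑ) ≤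
      18 * l2norm (fun z => ‖fcoef G z‖ₑ) := by
  have hM : ∀ n, 1 ≤ ⌈X n⌉₊ := fun n => Nat.one_le_ceil_iff.2 (by linarith [hX n])
  have h := l2norm_iSup_average_le (D := (D : ℤ)) (by positivity) (fun n => ⌈X n⌉₊) hM
    (fun z => 2 * ‖fcoef G z‖) (fun z => by positivity)
  refine (l2norm_mono fun z => iSup_mono fun n => ?_).trans (h.trans ?_)
  · rw [← ofReal_norm, fcoef_Mhat_mul D hG]
    refine ENNReal.ofReal_le_ofReal ?_
    have hx0 : 0 < X n := by linarith [hX n]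
    have hc0 : (0 : ℝ) < ⌈X n⌉₊ := by exact_mod_cast hM n
    rw [norm_mul, Complex.norm_real, Real.norm_of_nonneg (by positivity), ← Finset.mul_sum,
      mul_comm (2 : ℝ), mul_div_assoc, mul_comm]
    refine mul_le_mul (norm_sum_le _ _) ?_ (by positivity) (by positivity)
    rw [div_le_div_iff₀ hx0 hc0, one_mul]
    exact natCeil_le_two_mul (hX n)
  · have e : ∀ z, ENNReal.ofReal (2 * ‖fcoef G z‖) = ‖fcoef G z‖ₑ + ‖fcoef G z‖ₑ := fun z => by
      rw [two_mul, ENNReal.ofReal_add (norm_nonneg _) (norm_nonneg _), ofReal_norm]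
    simp only [e]
    refine (mul_le_mul_right (l2norm_add_le _ _) _).trans (le_of_eq ?_)
    rw [← two_mul, ← mul_assoc]
    norm_num

/-- The profile `min(u, 1/u)`. -/
def bumpProfile (u : ℝ) : ℝ := if u ≤ 1 then u else 1 / u

/-- The indicator of `u ≤ 1`. -/
def lowIndicator (u : ℝ) : ℂ := if u ≤ 1 then 1 else 0

lemma bumpProfile_nonneg {u : ℝ} (hu : 0 ≤ u) : 0 ≤ bumpProfile u := by
  unfold bumpProfile; split_ifs <;> positivity

lemma bumpProfile_two_mul_le {u : ℝ} (hu : 0 ≤ u) : bumpProfile (2 * u) ≤ 2 * bumpProfile u := by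
  unfold bumpProfile
  split_ifs with h1 h2 h2
  · linarith
  · linarith
  · rw [div_le_iff₀ (by linarith)]; nlinarith
  · have : 0 < u := by linarith
    rw [div_le_iff₀ (by linarith)]; field_simp; norm_num

lemma norm_lowIndicator_two_mul_sub_le {u : ℝ} (hu : 0 ≤ u) :
    ‖lowIndicator (2 * u) - lowIndicator u‖ ≤ 2 * bumpProfile u := by
  unfold bumpProfile lowIndicator
  split_ifs with h1 h2 h2
  · simp; linarith
  · linarith
  · simp; linarith
  · simp; positivity

/-- A potential whose dyadic increments dominate `bumpProfile`. -/
def bumpPotential (u : ℝ) : ℝ := if u ≤ 1 then u else 3 - 2 / u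

lemma bumpPotential_nonneg {u : ℝ} (hu : 0 ≤ u) : 0 ≤ bumpPotential u := by
  unfold bumpPotential; split_ifs with h
  · exact hu
  · have : 2 / u ≤ 2 := by rw [div_le_iff₀ (by linarith)]; linarith
    linarith

lemma bumpPotential_le {u : ℝ} (hu : 0 ≤ u) : bumpPotential u ≤ 3 := by
  unfold bumpPotential; split_ifs with h
  · linarith
  · have : 0 ≤ 2 / u := by positivity
    linarith

lemma bumpProfile_le_potential (u : ℝ) :
    bumpProfile u ≤ bumpPotential (2 * u) - bumpPotential u := by
  unfold bumpProfile bumpPotential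
  split_ifs with h1 h2 h2
  · linarith
  · have h0 : 0 < u := by linarith
    have : 2 / (2 * u) ≤ 3 - 2 * u := by
      rw [div_le_iff₀ (by linarith)]; nlinarith
    linarith
  · linarith
  · have h0 : 0 < u := by linarith
    have : 2 / (2 * u) = 1 / u := by field_simp
    have : 2 / u = 1 / u + 1 / u := by ring
    linarith

lemma sum_bumpProfile_le {t : ℝ} (ht : 0 ≤ t) (L : ℕ) :
    ∑ n ∈ Finset.range L, bumpProfile (2 ^ n * t) ≤ 3 := by
  calc _ ≤ ∑ n ∈ Finset.range L, (bumpPotential (2 ^ (n + 1) * t) - bumpPotential (2 ^ n * t)) := by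
        refine Finset.sum_le_sum fun n _ => ?_
        rw [pow_succ', mul_assoc]
        exact bumpProfile_le_potential _
    _ = bumpPotential (2 ^ L * t) - bumpPotential (2 ^ 0 * t) :=
        Finset.sum_range_sub (fun n => bumpPotential (2 ^ n * t)) L
    _ ≤ 3 := by
        have := bumpPotential_le (u := 2 ^ L * t) (by positivity)
        have := bumpPotential_nonneg (u := 2 ^ 0 * t) (by positivity)
        linarith

lemma norm_e2pi_sub_one_le (t : ℝ) : ‖e2pi t - 1‖ ≤ 2 * Real.pi * |t| := by
  have h := Real.norm_exp_I_mul_ofReal_sub_one_le (x := 2 * Real.pi * t)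
  rw [Real.norm_eq_abs, abs_mul, abs_of_pos Real.two_pi_pos] at h
  convert h using 3
  unfold e2pi; congr 1; push_cast; ring

lemma four_mul_abs_le_norm_e2pi_sub_one {t : ℝ} (ht : |t| ≤ 1 / 2) :
    4 * |t| ≤ ‖e2pi t - 1‖ := by
  have h := Complex.norm_exp_I_mul_ofReal_sub_one (2 * Real.pi * t)
  have e : Complex.exp (Complex.I * ((2 * Real.pi * t : ℝ) : ℂ)) = e2pi t := by
    unfold e2pi; congr 1; push_cast; ring
  rw [e] at h
  rw [h, show 2 * Real.pi * t / 2 = Real.pi * t by ring, norm_mul, Real.norm_eq_abs,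
    Real.norm_eq_abs, abs_two]
  have h2 := Real.mul_abs_le_abs_sin (x := Real.pi * t) (by
    rw [abs_mul, abs_of_pos Real.pi_pos]; nlinarith [Real.pi_pos])
  rw [abs_mul, abs_of_pos Real.pi_pos] at h2
  have : 2 / Real.pi * (Real.pi * |t|) = 2 * |t| := by
    field_simp
  linarith

lemma e2pi_nat_mul (n : ℕ) (t : ℝ) : e2pi (n * t) = e2pi t ^ n := by
  unfold e2pi
  rw [← Complex.exp_nat_mul]; congr 1; push_cast; ring

lemma norm_sum_e2pi_mul_le (M : ℕ) {θ : ℝ} (hθ : |θ| ≤ 1 / 2) :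
    ‖∑ n ∈ Finset.range M, e2pi (-(n * θ))‖ * (4 * |θ|) ≤ 2 := by
  have e : ∀ n : ℕ, e2pi (-(n * θ)) = e2pi (-θ) ^ n := fun n => by
    rw [← e2pi_nat_mul]; ring_nf
  simp only [e]
  have h := geom_sum_mul (e2pi (-θ)) M
  have h1 := four_mul_abs_le_norm_e2pi_sub_one (t := -θ) (by rwa [abs_neg])
  rw [abs_neg] at h1
  calc _ ≤ ‖∑ n ∈ Finset.range M, e2pi (-θ) ^ n‖ * ‖e2pi (-θ) - 1‖ := by gcongr
    _ = ‖e2pi (-θ) ^ M - 1‖ := by rw [← norm_mul, h]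
    _ ≤ ‖e2pi (-θ) ^ M‖ + ‖(1 : ℂ)‖ := norm_sub_le _ _
    _ = 2 := by rw [norm_pow, norm_e2pi]; norm_num

lemma norm_Mhat_sub_lowIndicator_le {x θ : ℝ} (hx : 1 ≤ x) (hθ : |θ| ≤ 1 / 4) :
    ‖Mhat x θ - lowIndicator (x * |θ|)‖ ≤ 26 * bumpProfile (x * |θ|) + 1 / x := by
  have hx0 : 0 < x := by linarith
  have hc := natCeil_le_two_mul hx
  have hc1 := Nat.le_ceil x
  have hc2 := (Nat.ceil_lt_add_one hx0.le).le
  unfold bumpProfile lowIndicator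
  split_ifs with hu
  · have e : Mhat x θ - 1 = ((1 / x : ℝ) : ℂ) *
        (∑ n ∈ Finset.range ⌈x⌉₊, (e2pi (-(n * θ)) - 1)) + ((1 / x * (⌈x⌉₊ - x) : ℝ) : ℂ) := by
      unfold Mhat
      rw [Finset.sum_sub_distrib]
      have : (x : ℂ) ≠ 0 := by exact_mod_cast hx0.ne'
      generalize ∑ n ∈ Finset.range ⌈x⌉₊, e2pi (-(n * θ)) = σ
      simp only [Finset.sum_const, Finset.card_range, nsmul_eq_mul]
      push_cast
      field_simp
      ring
    have h1 : ‖∑ n ∈ Finset.range ⌈x⌉₊, (e2pi (-(n * θ)) - 1)‖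
        ≤ ⌈x⌉₊ * (2 * Real.pi * (⌈x⌉₊ * |θ|)) := by
      refine (norm_sum_le _ _).trans ?_
      refine (Finset.sum_le_card_nsmul _ _ (2 * Real.pi * (⌈x⌉₊ * |θ|)) fun n hn => ?_).trans
        (by simp)
      refine (norm_e2pi_sub_one_le _).trans ?_
      rw [abs_neg, abs_mul, Nat.abs_cast]
      have : (n : ℝ) ≤ ⌈x⌉₊ := by exact_mod_cast (Finset.mem_range.1 hn).le
      gcongr
    rw [e]
    refine (norm_add_le _ _).trans (add_le_add ?_ ?_)
    · rw [norm_mul, Complex.norm_real, Real.norm_of_nonneg (by positivity)]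
      calc 1 / x * ‖∑ n ∈ Finset.range ⌈x⌉₊, (e2pi (-(n * θ)) - 1)‖
          ≤ 1 / x * ((2 * x) * (2 * Real.pi * ((2 * x) * |θ|))) := by
            gcongr
            exact h1.trans (by gcongr)
        _ = 8 * Real.pi * (x * |θ|) := by field_simp; ring
        _ ≤ 26 * (x * |θ|) := by
            gcongr
            linarith [Real.pi_lt_d2]
    · rw [Complex.norm_real, Real.norm_of_nonneg (mul_nonneg (by positivity) (by linarith))]
      refine mul_le_of_le_one_right (by positivity) (by linarith)
  · rw [sub_zero, Mhat, norm_mul, Complex.norm_real, Real.norm_of_nonneg (by positivity)]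
    have hθ0 : 0 < |θ| := by
      by_contra h
      have : |θ| = 0 := le_antisymm (not_lt.1 h) (abs_nonneg _)
      simp [this] at hu
    have h := norm_sum_e2pi_mul_le ⌈x⌉₊ (θ := θ) (by linarith)
    rw [← le_div_iff₀ (by positivity)] at h
    calc _ ≤ 1 / x * (2 / (4 * |θ|)) := by gcongr
      _ = 1 / 2 * (1 / (x * |θ|)) := by field_simp; norm_num
      _ ≤ 26 * (1 / (x * |θ|)) := by gcongr; norm_num
      _ ≤ _ := le_add_of_nonneg_right (by positivity)

lemma tsum_enorm_le_of_sum_range_le {v : ℕ → ℂ} {B : ℝ}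
    (h : ∀ L, ∑ n ∈ Finset.range L, ‖v n‖ ≤ B) : ∑' n, ‖v n‖ₑ ≤ ENNReal.ofReal B := by
  rw [ENNReal.tsum_eq_iSup_nat]
  refine iSup_le fun L => ?_
  simp only [← ofReal_norm]
  rw [← ENNReal.ofReal_sum_of_nonneg fun n _ => norm_nonneg _]
  exact ENNReal.ofReal_le_ofReal (h L)

lemma sum_half_pow_le (L : ℕ) : ∑ n ∈ Finset.range L, (1 / 2 : ℝ) ^ n ≤ 2 := by
  have := geom_sum_eq (show (1 / 2 : ℝ) ≠ 1 by norm_num) L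
  rw [this]
  have : (0 : ℝ) < (1 / 2) ^ L := by positivity
  rw [div_le_iff_of_neg (by norm_num)]
  linarith

lemma sum_bumpProfile_add_le {t A : ℝ} (ht : 0 ≤ t) (hA : 0 ≤ A) (L : ℕ) {v : ℕ → ℂ} {δ : ℝ}
    (hδ : 0 ≤ δ)
    (hv : ∀ n, ‖v n‖ ≤ δ * (A * bumpProfile (2 ^ n * t) + 2 * (1 / 2) ^ n)) :
    ∑ n ∈ Finset.range L, ‖v n‖ ≤ (3 * A + 4) * δ := by
  calc _ ≤ ∑ n ∈ Finset.range L, δ * (A * bumpProfile (2 ^ n * t) + 2 * (1 / 2) ^ n) :=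
        Finset.sum_le_sum fun n _ => hv n
    _ = δ * (A * ∑ n ∈ Finset.range L, bumpProfile (2 ^ n * t)
          + 2 * ∑ n ∈ Finset.range L, (1 / 2 : ℝ) ^ n) := by
        simp only [Finset.mul_sum, ← Finset.sum_add_distrib]
    _ ≤ δ * (A * 3 + 2 * 2) := by
        gcongr
        · exact sum_bumpProfile_le ht L
        · exact sum_half_pow_le L
    _ = _ := by ring

lemma norm_dyadic_Mhat_sub_le {ℓ n0 : ℕ} {β : ℝ} (hℓ : 1 ≤ ℓ) (hℓn : (ℓ : ℝ) ≤ 2 ^ n0)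
    (hβ : ℓ * |β| ≤ 1 / 4) (n : ℕ) :
    ‖Mhat (2 ^ (n0 + n) / ℓ) (ℓ * β) - lowIndicator (2 ^ n * (2 ^ n0 * |β|))‖ ≤
      26 * bumpProfile (2 ^ n * (2 ^ n0 * |β|)) + (1 / 2) ^ n := by
  have hℓ0 : (0 : ℝ) < ℓ := by exact_mod_cast hℓ
  have h2 : (1 : ℝ) ≤ 2 ^ n := one_le_pow₀ (by norm_num)
  have hx : (1 : ℝ) ≤ 2 ^ (n0 + n) / ℓ := by
    rw [le_div_iff₀ hℓ0, pow_add]; nlinarith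
  have habs : |(ℓ : ℝ) * β| = ℓ * |β| := by rw [abs_mul, Nat.abs_cast]
  have h := norm_Mhat_sub_lowIndicator_le hx (θ := ℓ * β) (by rwa [habs])
  have e : (2 ^ (n0 + n) / ℓ : ℝ) * |(ℓ : ℝ) * β| = 2 ^ n * (2 ^ n0 * |β|) := by
    rw [habs, pow_add]; field_simp
  rw [e] at h
  refine h.trans ?_
  gcongr
  rw [one_div_div, div_pow, one_pow, pow_add, div_le_div_iff₀ (by positivity) (by positivity)]
  nlinarith

lemma norm_dyadic_Mhat_succ_sub_le {ℓ n0 : ℕ} {β : ℝ} (hℓ : 1 ≤ ℓ) (hℓn : (ℓ : ℝ) ≤ 2 ^ n0)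
    (hβ : ℓ * |β| ≤ 1 / 4) (n : ℕ) :
    ‖Mhat (2 ^ (n0 + (n + 1)) / ℓ) (ℓ * β) - Mhat (2 ^ (n0 + n) / ℓ) (ℓ * β)‖ ≤
      80 * bumpProfile (2 ^ n * (2 ^ n0 * |β|)) + 2 * (1 / 2) ^ n := by
  have h1 := norm_dyadic_Mhat_sub_le hℓ hℓn hβ n
  have h2 := norm_dyadic_Mhat_sub_le hℓ hℓn hβ (n + 1)
  set u : ℝ := 2 ^ n * (2 ^ n0 * |β|) with hu
  have hu0 : 0 ≤ u := by positivity
  have e : (2 : ℝ) ^ (n + 1) * (2 ^ n0 * |β|) = 2 * u := by rw [hu, pow_succ]; ring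
  rw [e] at h2
  have h3 := bumpProfile_two_mul_le hu0
  have h4 := norm_lowIndicator_two_mul_sub_le hu0
  have h5 : (1 / 2 : ℝ) ^ (n + 1) = (1 / 2) ^ n / 2 := by rw [pow_succ]; ring
  have h6 : (0 : ℝ) < (1 / 2) ^ n := by positivity
  rw [h5] at h2
  set A := Mhat (2 ^ (n0 + (n + 1)) / ℓ) (ℓ * β)
  set B := Mhat (2 ^ (n0 + n) / ℓ) (ℓ * β)
  calc ‖A - B‖ = ‖(A - lowIndicator (2 * u)) + (lowIndicator (2 * u) - lowIndicator u)
        - (B - lowIndicator u)‖ := by congr 1; ring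
    _ ≤ ‖A - lowIndicator (2 * u)‖ + ‖lowIndicator (2 * u) - lowIndicator u‖
        + ‖B - lowIndicator u‖ := (norm_sub_le _ _).trans (by gcongr; exact norm_add_le _ _)
    _ ≤ _ := by linarith

/-- Maximal inequality for a family of multipliers that are, near each frequency, multiples of
dyadic averages along progressions of some step dividing `D`. -/
theorem l2norm_iSup_multifrequency_le (F : Finset ℤ) {D : ℕ} (hD : 1 ≤ D) {δ : ℝ} (hδ : 0 ≤ δ)
    (n0 s : ℕ) (m : ℕ → ℝ → ℂ) (G : ℝ → ℂ) (hm : ∀ n, BddMeas (m n)) (hG : BddMeas G)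
    (hGδ : ∀ ξ, ‖G ξ‖ ≤ δ) (hs : (4 * D : ℝ) ≤ 2 ^ (n0 + 2 ^ s))
    (hloc : ∀ ξ, ∃ (κ : ℂ) (ℓ : ℕ) (β : ℝ), 1 ≤ ℓ ∧ (ℓ : ℝ) ≤ 2 ^ n0 ∧
      ‖κ‖ ≤ δ ∧ ℓ * |β| ≤ 1 / 4 ∧
      (∀ n, m n ξ = κ * Mhat (2 ^ (n0 + n) / ℓ) (ℓ * β)) ∧
      ∀ x, Mhat x (D * ξ) * G ξ = if |β| ≤ 1 / (4 * D) then κ * Mhat x (D * β) else 0) :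
    l2norm (fun x => ⨆ n, ‖fcoef (fun ξ => m n ξ * expSum F ξ) x‖ₑ) ≤
      ENNReal.ofReal (422 * (s + 1) * δ) * (F.card : ℝ≥0∞) ^ ((1 : ℝ) / 2) := by
  have hD0 : (0 : ℝ) < D := by exact_mod_cast hD
  set X : ℕ → ℝ := fun k => 2 ^ (n0 + 2 ^ s + k) / D with hX
  have hX1 : ∀ k, 1 ≤ X k := fun k => by
    have : (1 : ℝ) ≤ 2 ^ k := one_le_pow₀ (by norm_num)
    rw [hX, le_div_iff₀ hD0, pow_add]; nlinarith
  set d : ℕ → ℝ → ℂ := fun k ξ => m (2 ^ s + k) ξ - Mhat (X k) (D * ξ) * G ξ with hd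
  have hMG : ∀ k, BddMeas fun ξ => Mhat (X k) (D * ξ) * G ξ := fun k =>
    (bddMeas_Mhat (hX1 k) (f := fun ξ => D * ξ) (by fun_prop)).mul hG
  have hdm : ∀ k, BddMeas (d k) := fun k => (hm _).sub (hMG k)
  have h1 := l2norm_rademacher_menshov F m hm (ENNReal.ofReal (244 * δ))
    (fun ξ => by
      obtain ⟨κ, ℓ, β, hℓ, hℓn, hκ, hβ, hmn, -⟩ := hloc ξ
      have hℓ0 : (0 : ℝ) < ℓ := by exact_mod_cast hℓ
      rw [hmn, ← ofReal_norm, norm_mul]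
      refine ENNReal.ofReal_le_ofReal ?_
      have := norm_Mhat_le (x := 2 ^ (n0 + 0) / ℓ) (by rwa [le_div_iff₀ hℓ0, one_mul]) (ℓ * β)
      calc _ ≤ δ * 2 := by gcongr
        _ ≤ _ := by linarith)
    (fun ξ => by
      obtain ⟨κ, ℓ, β, hℓ, hℓn, hκ, hβ, hmn, -⟩ := hloc ξ
      refine tsum_enorm_le_of_sum_range_le fun L => ?_
      refine (sum_bumpProfile_add_le (t := 2 ^ n0 * |β|) (A := 80) (by positivity) (by norm_num)
        L hδ fun n => ?_).trans (by linarith)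
      rw [hmn, hmn, ← mul_sub, norm_mul]
      gcongr
      exact norm_dyadic_Mhat_succ_sub_le hℓ hℓn hβ n) s
  have h2 := l2norm_iSup_fcoef_le F d hdm (ENNReal.ofReal (160 * δ)) (fun ξ => by
      obtain ⟨κ, ℓ, β, hℓ, hℓn, hκ, hβ, hmn, hg⟩ := hloc ξ
      refine tsum_enorm_le_of_sum_range_le fun L => ?_
      refine (sum_bumpProfile_add_le (t := 2 ^ (n0 + 2 ^ s) * |β|) (A := 52) (by positivity)
        (by norm_num) L hδ fun k => ?_).trans (by linarith)
      have hle : (2 : ℝ) ^ n0 ≤ 2 ^ (n0 + 2 ^ s) := pow_le_pow_right₀ (by norm_num) (Nat.le_add_right _ _)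
      have a1 := norm_dyadic_Mhat_sub_le hℓ (hℓn.trans hle) hβ k
      set u : ℝ := 2 ^ k * (2 ^ (n0 + 2 ^ s) * |β|) with hu
      have hu0 : 0 ≤ u := by positivity
      have hw := bumpProfile_nonneg hu0
      have hp : (0 : ℝ) < (1 / 2) ^ k := by positivity
      rw [hd]
      simp only
      rw [hmn, hg, ← add_assoc]
      split_ifs with hb
      · rw [le_div_iff₀ (by positivity)] at hb
        have a2 := norm_dyadic_Mhat_sub_le (n0 := n0 + 2 ^ s) hD (by linarith)
          (β := β) (by linarith) k
        rw [← hu] at a2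
        rw [← mul_sub, norm_mul]
        gcongr
        calc _ = ‖(Mhat (2 ^ (n0 + 2 ^ s + k) / ℓ) (ℓ * β) - lowIndicator u)
              - (Mhat (X k) (D * β) - lowIndicator u)‖ := by congr 1; ring
          _ ≤ _ := norm_sub_le _ _
          _ ≤ _ := by linarith
      · have hlow : lowIndicator u = 0 := by
          rw [lowIndicator, if_neg]
          push Not at hb ⊢
          rw [div_lt_iff₀ (by positivity)] at hb
          have h3 : (1 : ℝ) ≤ 2 ^ k := one_le_pow₀ (by norm_num)
          have h4 : 4 * D * |β| ≤ 2 ^ (n0 + 2 ^ s) * |β| := by gcongr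
          rw [hu]
          nlinarith
        rw [hlow, sub_zero] at a1
        rw [sub_zero, norm_mul]
        gcongr
        linarith)
  have h3 : l2norm (fun z => ⨆ k, ‖fcoef (fun ξ => Mhat (X k) (D * ξ) * (G ξ * expSum F ξ)) z‖ₑ)
      ≤ 18 * (ENNReal.ofReal δ * (F.card : ℝ≥0∞) ^ ((1 : ℝ) / 2)) := by
    refine (l2norm_iSup_fcoef_Mhat_le hD X hX1 (hG.mul (bddMeas_expSum F))).trans ?_
    gcongr
    refine l2norm_fcoef_le F G hG _ fun ξ => ?_
    rw [← ofReal_norm]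
    exact ENNReal.ofReal_le_ofReal (hGδ ξ)
  have hpt : ∀ x, (⨆ n, ‖fcoef (fun ξ => m n ξ * expSum F ξ) x‖ₑ) ≤
      (⨆ (n : ℕ) (_ : n < 2 ^ s), ‖fcoef (fun ξ => m n ξ * expSum F ξ) x‖ₑ) +
      ((⨆ k, ‖fcoef (fun ξ => d k ξ * expSum F ξ) x‖ₑ) +
      ⨆ k, ‖fcoef (fun ξ => Mhat (X k) (D * ξ) * (G ξ * expSum F ξ)) x‖ₑ) := by
    intro x
    refine iSup_le fun n => ?_
    rcases lt_or_ge n (2 ^ s) with hn | hn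
    · exact le_add_right (le_iSup₂_of_le n hn le_rfl)
    · obtain ⟨k, rfl⟩ := Nat.exists_eq_add_of_le hn
      refine le_add_left ?_
      have e : fcoef (fun ξ => m (2 ^ s + k) ξ * expSum F ξ) x
          = fcoef (fun ξ => d k ξ * expSum F ξ) x
            + fcoef (fun ξ => Mhat (X k) (D * ξ) * (G ξ * expSum F ξ)) x := by
        have h := fcoef_sub ((hm (2 ^ s + k)).mul (bddMeas_expSum F))
          ((hMG k).mul (bddMeas_expSum F)) x
        simp only [mul_assoc] at h
        simp only [hd, sub_mul, mul_assoc]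
        rw [h, sub_add_cancel]
      rw [e]
      refine (enorm_add_le _ _).trans (add_le_add ?_ ?_)
      · exact le_iSup (fun k => ‖fcoef (fun ξ => d k ξ * expSum F ξ) x‖ₑ) k
      · exact le_iSup
          (fun k => ‖fcoef (fun ξ => Mhat (X k) (D * ξ) * (G ξ * expSum F ξ)) x‖ₑ) k
  refine (l2norm_mono hpt).trans ((l2norm_add_le _ _).trans ?_)
  refine (add_le_add h1 ((l2norm_add_le _ _).trans (add_le_add h2 h3))).trans ?_
  have e1 : (s + 1 : ℝ≥0∞) = ENNReal.ofReal (s + 1) := by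
    rw [ENNReal.ofReal_add (by positivity) zero_le_one, ENNReal.ofReal_natCast, ENNReal.ofReal_one]
  have e2 : (18 : ℝ≥0∞) = ENNReal.ofReal 18 := by simp
  rw [e1, e2, ← mul_assoc, ← mul_assoc, ← add_mul, ← add_mul, ← ENNReal.ofReal_mul (by positivity),
    ← ENNReal.ofReal_mul (by positivity), ← ENNReal.ofReal_add (by positivity) (by positivity),
    ← ENNReal.ofReal_add (by positivity) (by positivity)]
  gcongr
  have : 0 ≤ (s : ℝ) * δ := by positivity
  linarith

lemma y_mul_hgt {y q : ℕ} (h : hgt y q ≠ 0) : Nat.lcm y q = y * hgt y q := by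
  unfold hgt at h ⊢
  split_ifs at h ⊢ with h1
  · simp at h
  · exact (Nat.mul_div_cancel' (Nat.dvd_lcm_left y q)).symm

lemma gcd_mul_hgt {y q : ℕ} (hy : 1 ≤ y) (h : hgt y q ≠ 0) : q = Nat.gcd y q * hgt y q := by
  have h1 := y_mul_hgt h
  have h2 := Nat.gcd_mul_lcm y q
  rw [h1] at h2
  refine Nat.eq_of_mul_eq_mul_left hy ?_
  rw [← h2]; ring

lemma coprime_gcd_hgt {y q : ℕ} (hy : 1 ≤ y) (hq : 1 ≤ q) (h : hgt y q ≠ 0) :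
    Nat.Coprime (Nat.gcd y q) (hgt y q) := by
  have h0 := gcd_mul_hgt hy h
  set g := Nat.gcd y q with hg
  have hgpos : 0 < g := Nat.gcd_pos_of_pos_left _ hy
  have hd : q / g = hgt y q := by
    conv_lhs => rw [h0]
    exact Nat.mul_div_cancel_left _ hgpos
  by_cases hc : 1 < g ∧ g < q ∧ 1 < Nat.gcd g (q / g)
  · exfalso; apply h; unfold hgt; rw [if_pos hc]
  · rw [hd] at hc
    by_cases h1 : 1 < g
    · by_cases h2 : g < q
      · have : ¬ 1 < Nat.gcd g (hgt y q) := fun h3 => hc ⟨h1, h2, h3⟩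
        have h4 : 0 < Nat.gcd g (hgt y q) := Nat.gcd_pos_of_pos_left _ hgpos
        show Nat.gcd g (hgt y q) = 1
        omega
      · have : g ≤ q := Nat.gcd_le_right _ hq
        have he : g = q := by omega
        have : hgt y q = 1 := by
          rw [← hd, he]; exact Nat.div_self hq
        rw [this]; exact Nat.coprime_one_right _
    · have : g = 1 := by omega
      rw [this]; exact Nat.coprime_one_left _

lemma coprime_hgt {y q : ℕ} (hy : 1 ≤ y) (hq : 1 ≤ q) (h : hgt y q ≠ 0) :
    Nat.Coprime y (hgt y q) := by
  have h0 := gcd_mul_hgt hy h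
  have h1 := coprime_gcd_hgt hy hq h
  have hgpos : 0 < Nat.gcd y q := Nat.gcd_pos_of_pos_left _ hy
  refine Nat.Coprime.symm (Nat.coprime_of_dvd fun p hp hph hpy => ?_)
  -- `p ∣ h`, `p ∣ y` forces `p ∣ gcd y q`
  have hpq : p ∣ q := by rw [h0]; exact Dvd.dvd.mul_left hph _
  have hpg : p ∣ Nat.gcd y q := Nat.dvd_gcd hpy hpq
  have := Nat.dvd_gcd hpg hph
  rw [h1] at this
  exact hp.one_lt.ne' (Nat.dvd_one.mp this)

lemma totient_lcm {y q : ℕ} (hy : 1 ≤ y) (hq : 1 ≤ q) (h : hgt y q ≠ 0) :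
    Nat.totient (Nat.lcm y q) = Nat.totient y * Nat.totient (hgt y q) := by
  rw [y_mul_hgt h, Nat.totient_mul (coprime_hgt hy hq h)]

/-- A sum of a `q`-periodic function over a full period is shift invariant. -/
lemma sum_Icc_add_periodic {q : ℕ} (F : ℕ → ℂ) (hF : ∀ r, F (r + q) = F r) (t : ℕ) :
    ∑ r ∈ Finset.Icc 1 q, F (r + t) = ∑ r ∈ Finset.Icc 1 q, F r := by
  have key : ∀ H : ℕ → ℂ, (∀ r, H (r + q) = H r) →
      ∑ r ∈ Finset.Icc 1 q, H (r + 1) = ∑ r ∈ Finset.Icc 1 q, H r := by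
    intro H hH
    have e : ∀ K : ℕ → ℂ, ∑ r ∈ Finset.Icc 1 q, K r = ∑ r ∈ Finset.range q, K (r + 1) := by
      intro K
      have : Finset.Icc 1 q = Finset.Ico 1 (q + 1) := by ext; simp
      rw [this, Finset.sum_Ico_eq_sum_range]
      simp [add_comm]
    rw [e, e, ← sub_eq_zero, ← Finset.sum_sub_distrib, Finset.sum_range_sub (fun r => H (r + 1))]
    rw [add_comm q 1, hH, zero_add, sub_self]
  induction t with
  | zero => simp
  | succ t ih =>
    rw [← ih, ← key (fun r => F (r + t)) (fun r => by rw [add_right_comm, hF])]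
    exact Finset.sum_congr rfl fun r _ => by congr 1; ring

lemma sum_dvd_filter_eq_zero {g h d : ℕ} {a : ℤ} (b : ℤ) (hgh : 0 < g * h) (hd : d ∣ h)
    (hdh : d < h) (ha : IsCoprime a ((g * h : ℕ) : ℤ)) :
    ∑ r ∈ (Finset.Icc 1 (g * h)).filter (fun r : ℕ => d ∣ r ∧ (r : ℤ) % g = b % g),
      e2pi (-((((r : ℤ) * a : ℤ) : ℝ) / ((g * h : ℕ) : ℝ))) = 0 := by
  obtain ⟨k, rfl⟩ := hd
  have hg : 0 < g := Nat.pos_of_ne_zero (by rintro rfl; simp at hgh)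
  have hd0 : 0 < d := Nat.pos_of_ne_zero (by rintro rfl; simp at hgh)
  have hk : 1 < k := by
    by_contra hk
    have : k ≤ 1 := by omega
    have := Nat.mul_le_mul_left d this
    omega
  set q := g * (d * k) with hq
  have hqR : (q : ℝ) ≠ 0 := by exact_mod_cast hgh.ne'
  rw [Finset.sum_filter]
  set F : ℕ → ℂ := fun r => if d ∣ r ∧ (r : ℤ) % g = b % g then
    e2pi (-((((r : ℤ) * a : ℤ) : ℝ) / (q : ℝ))) else 0 with hF
  have hper : ∀ r, F (r + q) = F r := by
    intro r
    simp only [hF]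
    have c1 : d ∣ r + q ↔ d ∣ r := (Nat.dvd_add_left ⟨g * k, by rw [hq]; ring⟩)
    have c2 : ((r + q : ℕ) : ℤ) % g = (r : ℤ) % g := by
      rw [hq]; push_cast; exact Int.add_mul_emod_self_left _ _ _
    simp only [c1, c2]
    congr 1
    rw [← e2pi_add_int (-((((r : ℤ) * a : ℤ) : ℝ) / (q : ℝ))) (-a)]
    congr 1
    push_cast
    field_simp
    ring
  have hsh := sum_Icc_add_periodic F hper (d * g)
  have hmul : ∀ r, F (r + d * g) = e2pi (-((a : ℝ) / k)) * F r := by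
    intro r
    simp only [hF]
    have c1 : d ∣ r + d * g ↔ d ∣ r := (Nat.dvd_add_left ⟨g, rfl⟩)
    have c2 : ((r + d * g : ℕ) : ℤ) % g = (r : ℤ) % g := by
      push_cast; exact Int.add_mul_emod_self_right _ _ _
    simp only [c1, c2, mul_ite, mul_zero, ← e2pi_add]
    congr 2
    have hg' : (g : ℝ) ≠ 0 := by positivity
    have hd' : (d : ℝ) ≠ 0 := by positivity
    have hk' : (k : ℝ) ≠ 0 := by positivity
    rw [hq]
    push_cast
    field_simp
    ring
  simp only [hmul] at hsh
  rw [← Finset.mul_sum] at hsh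
  have hne : e2pi (-((a : ℝ) / k)) ≠ 1 := by
    intro h1
    unfold e2pi at h1
    rw [Complex.exp_eq_one_iff] at h1
    obtain ⟨n, hn⟩ := h1
    have hk' : (k : ℂ) ≠ 0 := by exact_mod_cast (by omega : k ≠ 0)
    have h2 : (-(a : ℂ) / k) = n := by
      have h3 : (2 * Real.pi * Complex.I : ℂ) ≠ 0 := Complex.two_pi_I_ne_zero
      apply mul_left_cancel₀ h3
      push_cast at hn
      rw [← neg_div] at hn
      rw [hn]; ring
    rw [div_eq_iff hk'] at h2
    have h4 : -a = n * k := by exact_mod_cast h2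
    have h5 : (k : ℤ) ∣ a := ⟨-n, by linarith [h4, mul_comm n (k : ℤ), mul_neg (k : ℤ) n]⟩
    have h6 : (k : ℤ) ∣ ((q : ℕ) : ℤ) := ⟨g * d, by rw [hq]; push_cast; ring⟩
    have h7 := ha.isUnit_of_dvd' h5 h6
    rw [Int.isUnit_iff] at h7
    omega
  have h8 : (e2pi (-((a : ℝ) / k)) - 1) * ∑ r ∈ Finset.Icc 1 q, F r = 0 := by
    rw [sub_mul, one_mul, hsh, sub_self]
  exact (mul_eq_zero.mp h8).resolve_left (sub_ne_zero.mpr hne)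

lemma card_dvd_filter_le_one {g h : ℕ} (b : ℤ) (hgh : Nat.Coprime g h) :
    ((Finset.Icc 1 (g * h)).filter (fun r : ℕ => h ∣ r ∧ (r : ℤ) % g = b % g)).card ≤ 1 := by
  rw [Finset.card_le_one]
  intro r hr s hs
  simp only [Finset.mem_filter, Finset.mem_Icc] at hr hs
  have h1 : ((g * h : ℕ) : ℤ) ∣ (r : ℤ) - s := by
    push_cast
    refine IsCoprime.mul_dvd (Nat.isCoprime_iff_coprime.mpr hgh) ?_ ?_
    · exact Int.ModEq.dvd (show (s : ℤ) ≡ r [ZMOD g] from hs.2.2.trans hr.2.2.symm)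
    · exact dvd_sub (by exact_mod_cast hr.2.1) (by exact_mod_cast hs.2.1)
  have h2 : |(r : ℤ) - s| < ((g * h : ℕ) : ℤ) := by
    rw [abs_lt]; constructor <;> omega
  have := Int.eq_zero_of_abs_lt_dvd h1 h2
  omega

lemma norm_restricted_ramanujan_le {g h : ℕ} {a b : ℤ} (hgh : 0 < g * h) (hc : Nat.Coprime g h)
    (hb : IsCoprime b (g : ℤ)) (ha : IsCoprime a ((g * h : ℕ) : ℤ)) :
    ‖∑ r ∈ (Finset.Icc 1 (g * h)).filter
        (fun r : ℕ => Nat.gcd r (g * h) = 1 ∧ (r : ℤ) % g = b % g),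
      e2pi (-((((r : ℤ) * a : ℤ) : ℝ) / ((g * h : ℕ) : ℝ)))‖ ≤ 1 := by
  have hh : h ≠ 0 := by rintro rfl; simp at hgh
  have hmob : ∀ r : ℕ, (r : ℤ) % g = b % g →
      (if Nat.gcd r (g * h) = 1 then (1 : ℂ) else 0) =
        ∑ d ∈ h.divisors.filter (fun d => d ∣ r), ((ArithmeticFunction.moebius d : ℤ) : ℂ) := by
    intro r hr
    have hrg : Nat.Coprime r g := by
      rw [← Nat.isCoprime_iff_coprime]
      have : (r : ℤ) = b + g * ((r : ℤ) / g - b / g) := by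
        have e1 := Int.emod_add_mul_ediv (r : ℤ) g
        have e2 := Int.emod_add_mul_ediv b g
        linarith [mul_sub (g : ℤ) ((r : ℤ) / g) (b / g)]
      rw [this]
      exact IsCoprime.add_mul_left_left hb _
    have h1 : h.divisors.filter (fun d => d ∣ r) = (Nat.gcd r h).divisors := by
      ext d
      simp only [Finset.mem_filter, Nat.mem_divisors, Nat.dvd_gcd_iff]
      have : Nat.gcd r h ≠ 0 := Nat.gcd_ne_zero_right hh
      tauto
    rw [h1]
    have h2 : ∑ d ∈ (Nat.gcd r h).divisors, ArithmeticFunction.moebius d =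
        if Nat.gcd r h = 1 then 1 else 0 := by
      rw [← ArithmeticFunction.coe_mul_zeta_apply, ArithmeticFunction.moebius_mul_coe_zeta,
        ArithmeticFunction.one_apply]
    have h3 : Nat.gcd r (g * h) = 1 ↔ Nat.gcd r h = 1 :=
      ⟨fun h => Nat.Coprime.coprime_mul_left_right h, fun h => Nat.Coprime.mul_right hrg h⟩
    rw [← Int.cast_sum, h2]
    simp only [h3]
    split_ifs <;> simp
  have hsum : ∑ r ∈ (Finset.Icc 1 (g * h)).filter
        (fun r : ℕ => Nat.gcd r (g * h) = 1 ∧ (r : ℤ) % g = b % g),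
      e2pi (-((((r : ℤ) * a : ℤ) : ℝ) / ((g * h : ℕ) : ℝ))) =
      ∑ d ∈ h.divisors, ((ArithmeticFunction.moebius d : ℤ) : ℂ) *
        ∑ r ∈ (Finset.Icc 1 (g * h)).filter (fun r : ℕ => d ∣ r ∧ (r : ℤ) % g = b % g),
          e2pi (-((((r : ℤ) * a : ℤ) : ℝ) / ((g * h : ℕ) : ℝ))) := by
    simp only [Finset.sum_filter, Finset.mul_sum]
    rw [Finset.sum_comm]
    refine Finset.sum_congr rfl fun r _ => ?_
    by_cases hr : (r : ℤ) % g = b % g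
    · have := hmob r hr
      rw [Finset.sum_filter] at this
      simp only [hr, and_true, mul_ite, mul_zero]
      calc _ = (if Nat.gcd r (g * h) = 1 then (1 : ℂ) else 0) *
            e2pi (-((((r : ℤ) * a : ℤ) : ℝ) / ((g * h : ℕ) : ℝ))) := by split_ifs <;> simp
        _ = _ := by
          rw [this, Finset.sum_mul]
          exact Finset.sum_congr rfl fun d _ => by split_ifs <;> simp
    · simp [hr]
  rw [hsum, Finset.sum_eq_single h]
  · rw [norm_mul]
    have h1 : ‖((ArithmeticFunction.moebius h : ℤ) : ℂ)‖ ≤ 1 := by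
      rw [Complex.norm_intCast]
      exact_mod_cast ArithmeticFunction.abs_moebius_le_one
    refine mul_le_one₀ h1 (norm_nonneg _) ((norm_sum_le _ _).trans ?_)
    simp only [norm_e2pi, Finset.sum_const, nsmul_eq_mul, mul_one]
    exact_mod_cast card_dvd_filter_le_one b hc
  · intro d hd hdh
    have hd' := Nat.mem_divisors.mp hd
    rw [sum_dvd_filter_eq_zero b hgh hd'.1 (lt_of_le_of_ne (Nat.le_of_dvd (by omega) hd'.1) hdh) ha,
      mul_zero]
  · intro hn
    exact absurd (Nat.mem_divisors.mpr ⟨dvd_refl _, hh⟩) hn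

lemma norm_Ups_le {y q : ℕ} {a b : ℤ} (hy : 1 ≤ y) (hq : 1 ≤ q) (h : hgt y q ≠ 0)
    (hb : Int.gcd b y = 1) (ha : Int.gcd a q = 1) :
    ‖Ups y b a q‖ ≤ 1 / (Nat.totient (hgt y q) : ℝ) := by
  have h0 := gcd_mul_hgt hy h
  have hpos : 0 < Nat.gcd y q * hgt y q := by omega
  have hbg : IsCoprime b ((Nat.gcd y q : ℕ) : ℤ) :=
    (Int.isCoprime_iff_gcd_eq_one.mpr hb).of_isCoprime_of_dvd_right
      (by exact_mod_cast Nat.gcd_dvd_left y q)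
  have haq : IsCoprime a ((Nat.gcd y q * hgt y q : ℕ) : ℤ) := by
    rw [← h0]; exact Int.isCoprime_iff_gcd_eq_one.mpr ha
  have key := norm_restricted_ramanujan_le hpos (coprime_gcd_hgt hy hq h) hbg haq
  rw [← h0] at key
  unfold Ups
  rw [norm_mul, totient_lcm hy hq h]
  have hφ : (Nat.totient y : ℂ) ≠ 0 := by
    exact_mod_cast (Nat.totient_pos.mpr hy).ne'
  have h1 : ‖(Nat.totient y : ℂ) / ((Nat.totient y * Nat.totient (hgt y q) : ℕ) : ℂ)‖ =
      1 / (Nat.totient (hgt y q) : ℝ) := by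
    push_cast
    rw [div_mul_eq_div_div, div_self hφ, norm_div, norm_one, Complex.norm_natCast]
  rw [h1]
  exact mul_le_of_le_one_right (by positivity) key

lemma one_div_card_add_one_le_prod (S : Finset ℕ) : (∀ p ∈ S, 2 ≤ p) →
    1 / ((S.card : ℝ) + 1) ≤ ∏ p ∈ S, (1 - (p : ℝ)⁻¹) := by
  induction S using Finset.induction_on_max with
  | empty => simp
  | insert m S hm ih =>
    intro h
    have hmS : m ∉ S := fun hmem => lt_irrefl _ (hm m hmem)
    have ih' := ih fun p hp => h p (Finset.mem_insert_of_mem hp)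
    rw [Finset.prod_insert hmS, Finset.card_insert_of_notMem hmS]
    have hm2 : 2 ≤ m := h m (Finset.mem_insert_self _ _)
    have hcard : S.card + 2 ≤ m := by
      have hsub : S ⊆ Finset.Ico 2 m := fun p hp =>
        Finset.mem_Ico.mpr ⟨h p (Finset.mem_insert_of_mem hp), hm p hp⟩
      have := Finset.card_le_card hsub
      rw [Nat.card_Ico] at this
      omega
    have hcardR : (S.card : ℝ) + 2 ≤ m := by exact_mod_cast hcard
    have h1 : ((S.card : ℝ) + 1) / (S.card + 2) ≤ 1 - (m : ℝ)⁻¹ := by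
      have : (m : ℝ)⁻¹ ≤ ((S.card : ℝ) + 2)⁻¹ := inv_anti₀ (by positivity) hcardR
      have e : ((S.card : ℝ) + 1) / (S.card + 2) = 1 - ((S.card : ℝ) + 2)⁻¹ := by
        field_simp; ring
      rw [e]; linarith
    calc (1 : ℝ) / (((S.card + 1 : ℕ) : ℝ) + 1)
        = ((S.card : ℝ) + 1) / (S.card + 2) * (1 / ((S.card : ℝ) + 1)) := by
          push_cast; field_simp; ring
      _ ≤ _ := by gcongr; exact le_trans (by positivity) h1

lemma le_totient_mul {h L : ℕ} (hh : h ≠ 0) (hL : h < 2 ^ L) :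
    (h : ℝ) ≤ Nat.totient h * (L + 1) := by
  have h1 : ((Nat.totient h : ℕ) : ℝ) = h * ∏ p ∈ h.primeFactors, (1 - (p : ℝ)⁻¹) := by
    have := Nat.totient_eq_mul_prod_factors h
    have := congrArg (fun t : ℚ => (t : ℝ)) this
    push_cast at this
    exact this
  have h2 := one_div_card_add_one_le_prod h.primeFactors fun p hp =>
    (Nat.prime_of_mem_primeFactors hp).two_le
  have h3 : h.primeFactors.card ≤ L := by
    have : 2 ^ h.primeFactors.card ≤ h := by
      calc 2 ^ h.primeFactors.card ≤ ∏ p ∈ h.primeFactors, p :=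
            Finset.pow_card_le_prod _ _ _ fun p hp => (Nat.prime_of_mem_primeFactors hp).two_le
        _ ≤ h := Nat.le_of_dvd (by omega) (Nat.prod_primeFactors_dvd h)
    exact (Nat.pow_lt_pow_iff_right (by norm_num : 1 < 2)).mp (this.trans_lt hL) |>.le
  have h4 : 1 / ((L : ℝ) + 1) ≤ ∏ p ∈ h.primeFactors, (1 - (p : ℝ)⁻¹) :=
    le_trans (one_div_le_one_div_of_le (by positivity) (by gcongr)) h2
  rw [h1, mul_assoc]
  have : 1 ≤ (∏ p ∈ h.primeFactors, (1 - (p : ℝ)⁻¹)) * (L + 1) := by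
    rwa [div_le_iff₀ (by positivity)] at h4
  exact le_mul_of_one_le_right (by positivity) this

lemma norm_Ups_le_of_lt {y q L : ℕ} {a b : ℤ} (hy : 1 ≤ y) (hq : 1 ≤ q) {K : ℝ} (hK : 1 ≤ K)
    (h1 : K ≤ hgt y q) (h2 : hgt y q < 2 ^ L)
    (hb : Int.gcd b y = 1) (ha : Int.gcd a q = 1) :
    ‖Ups y b a q‖ ≤ (L + 1) / K := by
  have h0 : hgt y q ≠ 0 := by
    intro h; rw [h] at h1; norm_num at h1; linarith
  have hφ : (0 : ℝ) < Nat.totient (hgt y q) := by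
    exact_mod_cast Nat.totient_pos.mpr (Nat.pos_of_ne_zero h0)
  refine (norm_Ups_le hy hq h0 hb ha).trans ?_
  rw [div_le_div_iff₀ hφ (by linarith), one_mul]
  have := le_totient_mul h0 h2
  linarith [mul_comm (Nat.totient (hgt y q) : ℝ) (L + 1)]

/-- Reduced fractions whose heights lie in a dyadic block are well separated. -/
lemma eq_of_mem_support {y q q' a a' : ℕ} {K ξ : ℝ} (hy : 1 ≤ y) (hK : 1 ≤ K)
    (hq : 1 ≤ q) (hq' : 1 ≤ q')
    (h1 : K ≤ hgt y q) (h2 : (hgt y q : ℝ) < 2 * K)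
    (h1' : K ≤ hgt y q') (h2' : (hgt y q' : ℝ) < 2 * K)
    (ha : Nat.Coprime a q) (ha' : Nat.Coprime a' q')
    (hs : (Nat.lcm y q : ℝ) ^ 2 * |ξ - a / q| ≤ 1 / 4)
    (hs' : (Nat.lcm y q' : ℝ) ^ 2 * |ξ - a' / q'| ≤ 1 / 4) : q = q' ∧ a = a' := by
  have h0 : hgt y q ≠ 0 := by intro h; rw [h] at h1; norm_num at h1; linarith
  have h0' : hgt y q' ≠ 0 := by intro h; rw [h] at h1'; norm_num at h1'; linarith
  rw [y_mul_hgt h0] at hs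
  rw [y_mul_hgt h0'] at hs'
  obtain ⟨c, hc⟩ : q ∣ y * hgt y q := by rw [← y_mul_hgt h0]; exact Nat.dvd_lcm_right _ _
  obtain ⟨c', hc'⟩ : q' ∣ y * hgt y q' := by rw [← y_mul_hgt h0']; exact Nat.dvd_lcm_right _ _
  set h := hgt y q with hh
  set h' := hgt y q' with hh'
  have hyR : (1 : ℝ) ≤ y := by exact_mod_cast hy
  have hqR : (0 : ℝ) < q := by exact_mod_cast hq
  have hqR' : (0 : ℝ) < q' := by exact_mod_cast hq'
  have hcR : (y : ℝ) * h = q * c := by exact_mod_cast hc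
  have hcR' : (y : ℝ) * h' = q' * c' := by exact_mod_cast hc'
  have hhp : (0 : ℝ) < h := by linarith
  have hhp' : (0 : ℝ) < h' := by linarith
  -- scaled difference is an integer
  have hint : (y : ℝ) * h * h' * ((a : ℝ) / q - a' / q') =
      (((a * c * h' : ℕ) : ℤ) - ((a' * c' * h : ℕ) : ℤ) : ℤ) := by
    push_cast
    have e1 : (y : ℝ) * h * h' * (a / q) = a * c * h' := by
      rw [hcR]; field_simp
    have e2 : (y : ℝ) * h * h' * (a' / q') = a' * c' * h := by
      rw [mul_right_comm (y : ℝ), hcR']; field_simp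
    rw [mul_sub, e1, e2]
  have hsmall : |(y : ℝ) * h * h' * ((a : ℝ) / q - a' / q')| < 1 := by
    rw [abs_mul, abs_of_pos (by positivity)]
    have htri : |(a : ℝ) / q - a' / q'| ≤ |ξ - a / q| + |ξ - a' / q'| := by
      have := abs_sub (ξ - a' / q') (ξ - a / q)
      have e : (ξ - a' / q') - (ξ - a / q) = (a : ℝ) / q - a' / q' := by ring
      rw [e] at this; linarith
    set u := |ξ - a / q|
    set v := |ξ - a' / q'|
    have hu : 0 ≤ u := abs_nonneg _
    have hv : 0 ≤ v := abs_nonneg _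
    push_cast at hs hs'
    have b1 : (y : ℝ) * h * h' * u ≤ (h' / h) * (1 / 4) := by
      rw [div_mul_eq_mul_div, le_div_iff₀ hhp]
      have : (y : ℝ) * h * h' * u * h ≤ h' * ((y * h) ^ 2 * u) := by
        have : (y : ℝ) * h ^ 2 * h' * u ≤ y ^ 2 * h ^ 2 * h' * u := by
          gcongr; nlinarith
        nlinarith
      nlinarith
    have b2 : (y : ℝ) * h * h' * v ≤ (h / h') * (1 / 4) := by
      rw [div_mul_eq_mul_div, le_div_iff₀ hhp']
      have : (y : ℝ) * h * h' * v * h' ≤ h * ((y * h') ^ 2 * v) := by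
        have : (y : ℝ) * h * h' ^ 2 * v ≤ y ^ 2 * h * h' ^ 2 * v := by
          gcongr; nlinarith
        nlinarith
      nlinarith
    have c1 : (h' : ℝ) / h < 2 := by rw [div_lt_iff₀ hhp]; linarith
    have c2 : (h : ℝ) / h' < 2 := by rw [div_lt_iff₀ hhp']; linarith
    have : (y : ℝ) * h * h' * |(a : ℝ) / q - a' / q'| ≤ (y : ℝ) * h * h' * (u + v) := by gcongr
    linarith [mul_add ((y : ℝ) * h * h') u v]
  rw [hint] at hsmall
  have hz : (((a * c * h' : ℕ) : ℤ) - ((a' * c' * h : ℕ) : ℤ) : ℤ) = 0 := by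
    rw [← Int.abs_lt_one_iff]; exact_mod_cast hsmall
  rw [hz, Int.cast_zero] at hint
  have hfr : (a : ℝ) / q - a' / q' = 0 := by
    rcases mul_eq_zero.mp hint with h | h
    · exact absurd h (by positivity)
    · exact h
  rw [sub_eq_zero, div_eq_div_iff hqR.ne' hqR'.ne'] at hfr
  have hfr' : a * q' = a' * q := by exact_mod_cast hfr
  have d1 : q ∣ q' := (ha.symm).dvd_of_dvd_mul_left (hfr' ▸ Dvd.intro_left _ rfl)
  have d2 : q' ∣ q := (ha'.symm).dvd_of_dvd_mul_left (hfr' ▸ Dvd.intro_left _ rfl)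
  have hqq := Nat.dvd_antisymm d1 d2
  refine ⟨hqq, ?_⟩
  subst hqq
  exact Nat.eq_of_mul_eq_mul_right hq hfr'

lemma le_mul_hgt {y q : ℕ} (hy : 1 ≤ y) (h : hgt y q ≠ 0) : q ≤ y * hgt y q := by
  rw [← y_mul_hgt h]
  refine Nat.le_of_dvd ?_ (Nat.dvd_lcm_right y q)
  rw [y_mul_hgt h]
  exact Nat.mul_pos hy (Nat.pos_of_ne_zero h)

lemma hgt_ne_zero {y q : ℕ} {K : ℝ} (hK : 1 ≤ K) (h : K ≤ hgt y q) : hgt y q ≠ 0 := by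
  intro h0; rw [h0] at h; norm_num at h; linarith

lemma two_pow_rpow_pow_ten (n : ℕ) : (((2 : ℝ) ^ n) ^ ((1 : ℝ) / 10)) ^ 10 = 2 ^ n := by
  rw [← Real.rpow_natCast, ← Real.rpow_mul (by positivity)]
  norm_num

lemma le_two_pow_rpow_iff {K : ℝ} (hK : 0 ≤ K) (n : ℕ) :
    K ≤ ((2 : ℝ) ^ n) ^ ((1 : ℝ) / 10) ↔ K ^ 10 ≤ 2 ^ n := by
  conv_rhs => rw [← two_pow_rpow_pow_ten n]
  rw [pow_le_pow_iff_left₀ hK (by positivity) (by norm_num)]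

lemma mul_le_two_pow {y h : ℝ} {n : ℕ} (h1 : 1 ≤ h) (hyn : y ^ 2 ≤ 2 ^ n)
    (hn : h ^ 10 ≤ 2 ^ n) : y * h ≤ 2 ^ n := by
  refine le_of_sq_le_sq ?_ (by positivity)
  have : h ^ 2 ≤ 2 ^ n := (pow_le_pow_right₀ h1 (by norm_num)).trans hn
  calc (y * h) ^ 2 = y ^ 2 * h ^ 2 := by ring
    _ ≤ 2 ^ n * 2 ^ n := by gcongr
    _ = _ := by ring

lemma Mhat_add_int (x θ : ℝ) (k : ℤ) : Mhat x (θ + k) = Mhat x θ := by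
  unfold Mhat
  congr 1
  refine Finset.sum_congr rfl fun n _ => ?_
  rw [← e2pi_add_int (-(n * θ)) (-(n * k))]
  congr 1
  push_cast; ring

lemma bddMeas_Mhat_comp (x : ℝ) {f : ℝ → ℝ} (hf : Continuous f) :
    BddMeas fun ξ => Mhat x (f ξ) := by
  unfold Mhat
  exact (bddMeas_const _).mul (BddMeas.sum _ fun n _ => bddMeas_e2pi (by fun_prop))

/-- The reduced fractions `p.2 / p.1` whose height lies in `[K, 2K)`. -/
def blockSet (y : ℕ) (K : ℝ) : Finset (ℕ × ℕ) :=
  (Finset.Icc 1 (y * ⌈2 * K⌉₊) ×ˢ Finset.Icc 1 (y * ⌈2 * K⌉₊)).filter fun p =>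
    (p.2 ≤ p.1 ∧ Nat.gcd p.2 p.1 = 1) ∧ K ≤ hgt y p.1 ∧ (hgt y p.1 : ℝ) < 2 * K

lemma mem_blockSet {y : ℕ} (hy : 1 ≤ y) {K : ℝ} (hK : 1 ≤ K) (p : ℕ × ℕ) :
    p ∈ blockSet y K ↔ (1 ≤ p.1 ∧ 1 ≤ p.2 ∧ p.2 ≤ p.1 ∧ Nat.gcd p.2 p.1 = 1) ∧
      K ≤ hgt y p.1 ∧ (hgt y p.1 : ℝ) < 2 * K := by
  simp only [blockSet, Finset.mem_filter, Finset.mem_product, Finset.mem_Icc]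
  constructor
  · tauto
  · rintro ⟨⟨h1, h2, h3, h4⟩, h5, h6⟩
    have h7 : hgt y p.1 ≤ ⌈2 * K⌉₊ := by exact_mod_cast h6.le.trans (Nat.le_ceil _)
    have h8 := (le_mul_hgt hy (hgt_ne_zero hK h5)).trans (Nat.mul_le_mul_left y h7)
    exact ⟨⟨⟨h1, h8⟩, h2, h3.trans h8⟩, ⟨h3, h4⟩, h5, h6⟩

/-- The part of the High multiplier coming from heights in `[K, 2K)`. -/
def blockMult (χ : ℝ → ℝ) (y : ℕ) (b : ℤ) (K : ℝ) (n : ℕ) (ξ : ℝ) : ℂ :=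
  ∑ p ∈ (blockSet y K).filter (fun p => (hgt y p.1 : ℝ) ≤ ((2 : ℝ) ^ n) ^ ((1 : ℝ) / 10)),
    Lhat χ y b (2 ^ n) p.2 p.1 ξ

section Cutoff

variable {χ : ℝ → ℝ}

lemma bddMeas_cutoff (hχc : Continuous χ) (hχr : ∀ x : ℝ, χ x ∈ Set.Icc (0 : ℝ) 1)
    {f : ℝ → ℝ} (hf : Continuous f) : BddMeas fun ξ => ((χ (f ξ) : ℝ) : ℂ) := by
  refine ⟨(Complex.continuous_ofReal.comp (hχc.comp hf)).measurable, 1, fun ξ => ?_⟩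
  rw [Complex.norm_real, Real.norm_of_nonneg (hχr _).1]
  exact (hχr _).2

lemma bddMeas_Lhat (hχc : Continuous χ) (hχr : ∀ x : ℝ, χ x ∈ Set.Icc (0 : ℝ) 1)
    (y : ℕ) (b : ℤ) (N : ℝ) (a q : ℕ) : BddMeas (Lhat χ y b N a q) := by
  unfold Lhat
  exact ((bddMeas_const _).mul (bddMeas_Mhat_comp _ (by fun_prop))).mul
    (bddMeas_cutoff hχc hχr (by fun_prop))

lemma exists_unique_support (hχ0 : ∀ x : ℝ, x ∉ Set.Icc (-(1/4) : ℝ) (1/4) → χ x = 0)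
    {y : ℕ} (hy : 1 ≤ y) {K : ℝ} (hK : 1 ≤ K) (ξ : ℝ) :
    (∀ p ∈ blockSet y K, χ ((Nat.lcm y p.1 : ℝ) ^ 2 * (ξ - (p.2 : ℝ) / (p.1 : ℝ))) = 0) ∨
    ∃ p₀ ∈ blockSet y K, (Nat.lcm y p₀.1 : ℝ) ^ 2 * |ξ - (p₀.2 : ℝ) / (p₀.1 : ℝ)| ≤ 1 / 4 ∧
      ∀ p ∈ blockSet y K, p ≠ p₀ →
        χ ((Nat.lcm y p.1 : ℝ) ^ 2 * (ξ - (p.2 : ℝ) / (p.1 : ℝ))) = 0 := by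
  have hsupp : ∀ p : ℕ × ℕ, χ ((Nat.lcm y p.1 : ℝ) ^ 2 * (ξ - (p.2 : ℝ) / (p.1 : ℝ))) ≠ 0 →
      (Nat.lcm y p.1 : ℝ) ^ 2 * |ξ - (p.2 : ℝ) / (p.1 : ℝ)| ≤ 1 / 4 := by
    intro p hp
    have h1 := by_contra fun h => hp (hχ0 _ h)
    rw [← abs_of_nonneg (sq_nonneg (Nat.lcm y p.1 : ℝ)), ← abs_mul, abs_le]
    exact ⟨h1.1, h1.2⟩
  by_cases h : ∀ p ∈ blockSet y K, χ ((Nat.lcm y p.1 : ℝ) ^ 2 * (ξ - (p.2 : ℝ) / (p.1 : ℝ))) = 0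
  · exact Or.inl h
  · right
    push Not at h
    obtain ⟨p₀, hp₀, hne⟩ := h
    refine ⟨p₀, hp₀, hsupp p₀ hne, fun p hp hpp => ?_⟩
    by_contra hne'
    rw [mem_blockSet hy hK] at hp hp₀
    obtain ⟨e1, e2⟩ := eq_of_mem_support (ξ := ξ) hy hK hp.1.1 hp₀.1.1 hp.2.1 hp.2.2 hp₀.2.1
      hp₀.2.2 hp.1.2.2.2 hp₀.1.2.2.2 (hsupp p hne') (hsupp p₀ hne)
    exact hpp (Prod.ext e1 e2)

lemma norm_Ups_blockSet_le {y L : ℕ} {b : ℤ} (hy : 1 ≤ y) (hb : Int.gcd b y = 1) {K : ℝ}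
    (hK : 1 ≤ K) (hL : 2 * K ≤ 2 ^ L) {p : ℕ × ℕ} (hp : p ∈ blockSet y K) :
    ‖Ups y b (p.2 : ℤ) p.1‖ ≤ (L + 1) / K := by
  rw [mem_blockSet hy hK] at hp
  refine norm_Ups_le_of_lt hy hp.1.1 hK hp.2.1 ?_ hb (by exact_mod_cast hp.1.2.2.2)
  exact_mod_cast hp.2.2.trans_le hL

lemma norm_blockMult_le (hχr : ∀ x : ℝ, χ x ∈ Set.Icc (0 : ℝ) 1)
    (hχ0 : ∀ x : ℝ, x ∉ Set.Icc (-(1/4) : ℝ) (1/4) → χ x = 0)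
    {y L : ℕ} {b : ℤ} (hy : 1 ≤ y) (hb : Int.gcd b y = 1) {K : ℝ} (hK : 1 ≤ K)
    (hL : 2 * K ≤ 2 ^ L) {n : ℕ} (hn : y ^ 2 < 2 ^ n) (ξ : ℝ) :
    ‖blockMult χ y b K n ξ‖ ≤ 2 * ((L + 1) / K) := by
  have hδ : 0 ≤ ((L : ℝ) + 1) / K := by positivity
  have hterm : ∀ p ∈ (blockSet y K).filter
      (fun p => (hgt y p.1 : ℝ) ≤ ((2 : ℝ) ^ n) ^ ((1 : ℝ) / 10)),
      ‖Lhat χ y b (2 ^ n) p.2 p.1 ξ‖ ≤ 2 * ((L + 1) / K) := by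
    intro p hp
    rw [Finset.mem_filter] at hp
    have h1 := norm_Ups_blockSet_le hy hb hK hL hp.1
    have hp' := (mem_blockSet hy hK p).mp hp.1
    have hh1 : (1 : ℝ) ≤ hgt y p.1 := hK.trans hp'.2.1
    have h0 := hgt_ne_zero hK hp'.2.1
    have hle : (Nat.lcm y p.1 : ℝ) ≤ 2 ^ n := by
      rw [y_mul_hgt h0]; push_cast
      exact mul_le_two_pow hh1 (by exact_mod_cast hn.le)
        ((le_two_pow_rpow_iff (by positivity) n).mp hp.2)
    have hpos : (0 : ℝ) < Nat.lcm y p.1 := by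
      exact_mod_cast Nat.lcm_pos hy hp'.1.1
    have h2 := norm_Mhat_le (x := 2 ^ n / (Nat.lcm y p.1 : ℝ)) (by rwa [le_div_iff₀ hpos, one_mul])
      ((Nat.lcm y p.1 : ℝ) * (ξ - (p.2 : ℝ) / (p.1 : ℝ)))
    unfold Lhat
    rw [norm_mul, norm_mul, Complex.norm_real, Real.norm_of_nonneg (hχr _).1]
    have h3 := (hχr ((Nat.lcm y p.1 : ℝ) ^ 2 * (ξ - (p.2 : ℝ) / (p.1 : ℝ)))).2
    calc _ ≤ ((L + 1) / K) * 2 * 1 := by gcongr; exact (hχr _).1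
      _ = _ := by ring
  unfold blockMult
  rcases exists_unique_support hχ0 hy hK ξ with h | ⟨p₀, -, -, h⟩
  · rw [Finset.sum_eq_zero]
    · simp; positivity
    · intro p hp
      unfold Lhat
      rw [h p (Finset.mem_filter.mp hp).1]; simp
  · have hz : ∀ p ∈ (blockSet y K).filter
        (fun p => (hgt y p.1 : ℝ) ≤ ((2 : ℝ) ^ n) ^ ((1 : ℝ) / 10)), p ≠ p₀ →
        Lhat χ y b (2 ^ n) p.2 p.1 ξ = 0 := by
      intro p hp hne
      unfold Lhat
      rw [h p (Finset.mem_filter.mp hp).1 hne]; simp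
    by_cases hm : p₀ ∈ (blockSet y K).filter
        (fun p => (hgt y p.1 : ℝ) ≤ ((2 : ℝ) ^ n) ^ ((1 : ℝ) / 10))
    · rw [Finset.sum_eq_single_of_mem p₀ hm hz]
      exact hterm p₀ hm
    · rw [Finset.sum_eq_zero fun p hp => hz p hp fun e => hm (e ▸ hp)]
      simp; positivity

lemma four_mul_factorial_le {m L : ℕ} (hL : 1 ≤ L) (hm : m ≤ 2 ^ L) :
    4 * m.factorial ≤ 2 ^ 2 ^ (2 * L) := by
  have h1 : m.factorial ≤ 2 ^ (L * 2 ^ L) := by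
    calc m.factorial ≤ (2 ^ L).factorial := Nat.factorial_le hm
      _ ≤ (2 ^ L) ^ (2 ^ L) := Nat.factorial_le_pow _
      _ = _ := by rw [pow_mul]
  have h2 : 2 + L * 2 ^ L ≤ 2 ^ (2 * L) := by
    have a1 : L + 1 ≤ 2 ^ L := Nat.lt_two_pow_self
    have a2 : 2 ≤ 2 ^ L := by
      calc 2 = 2 ^ 1 := rfl
        _ ≤ 2 ^ L := Nat.pow_le_pow_right (by norm_num) hL
    calc 2 + L * 2 ^ L ≤ (L + 1) * 2 ^ L := by nlinarith
      _ ≤ 2 ^ L * 2 ^ L := by gcongr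
      _ = _ := by rw [← pow_add]; ring_nf
  calc 4 * m.factorial ≤ 2 ^ 2 * 2 ^ (L * 2 ^ L) := by gcongr; norm_num
    _ = 2 ^ (2 + L * 2 ^ L) := by rw [pow_add]
    _ ≤ _ := Nat.pow_le_pow_right (by norm_num) h2

/-- The maximal estimate over scales large enough that the block is complete. -/
lemma l2norm_iSup_full_block_le (hχc : Continuous χ) (hχr : ∀ x : ℝ, χ x ∈ Set.Icc (0 : ℝ) 1)
    (hχ0 : ∀ x : ℝ, x ∉ Set.Icc (-(1/4) : ℝ) (1/4) → χ x = 0)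
    {y L : ℕ} {b : ℤ} (hy : 1 ≤ y) (hb : Int.gcd b y = 1) {K : ℝ} (hK : 1 ≤ K)
    (hL : 2 * K ≤ 2 ^ L) {n0 : ℕ} (hn0 : y ^ 2 < 2 ^ n0) (hK0 : (2 * K) ^ 10 ≤ 2 ^ n0)
    (F : Finset ℤ) :
    l2norm (fun x => ⨆ n : ℕ, ‖fcoef (fun ξ =>
        (∑ p ∈ blockSet y K, Lhat χ y b (2 ^ (n0 + n)) p.2 p.1 ξ) * expSum F ξ) x‖ₑ) ≤
      ENNReal.ofReal (422 * ((2 * L : ℕ) + 1) * ((L + 1) / K)) *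
        (F.card : ℝ≥0∞) ^ ((1 : ℝ) / 2) := by
  have hδ : 0 ≤ ((L : ℝ) + 1) / K := by positivity
  have hL1 : 1 ≤ L := by
    by_contra h
    have : L = 0 := by omega
    rw [this] at hL; norm_num at hL; linarith
  set m := ⌈2 * K⌉₊ with hm
  have hmL : m ≤ 2 ^ L := by rw [hm, Nat.ceil_le]; exact_mod_cast hL
  set D := y * m.factorial with hD
  have hD1 : 1 ≤ D := Nat.mul_pos hy (Nat.factorial_pos _)
  have hdvd : ∀ p ∈ blockSet y K, p.1 ∣ D := by
    intro p hp
    rw [mem_blockSet hy hK] at hp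
    have h0 := hgt_ne_zero hK hp.2.1
    refine (Nat.dvd_lcm_right y p.1).trans ?_
    rw [y_mul_hgt h0]
    refine Nat.mul_dvd_mul_left y (Nat.dvd_factorial (Nat.pos_of_ne_zero h0) ?_)
    exact_mod_cast hp.2.2.le.trans (Nat.le_ceil _)
  set G : ℝ → ℂ := fun ξ => ∑ p ∈ blockSet y K, Ups y b (p.2 : ℤ) p.1 *
    ((χ ((Nat.lcm y p.1 : ℝ) ^ 2 * (ξ - (p.2 : ℝ) / (p.1 : ℝ))) : ℝ) : ℂ) *
    (if |ξ - (p.2 : ℝ) / (p.1 : ℝ)| ≤ 1 / (4 * D) then 1 else 0) with hG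
  have hκ : ∀ p ∈ blockSet y K, ∀ ξ, ‖Ups y b (p.2 : ℤ) p.1 *
      ((χ ((Nat.lcm y p.1 : ℝ) ^ 2 * (ξ - (p.2 : ℝ) / (p.1 : ℝ))) : ℝ) : ℂ)‖ ≤ (L + 1) / K := by
    intro p hp ξ
    rw [norm_mul, Complex.norm_real, Real.norm_of_nonneg (hχr _).1]
    exact (mul_le_of_le_one_right (norm_nonneg _) (hχr _).2).trans
      (norm_Ups_blockSet_le hy hb hK hL hp)
  refine l2norm_iSup_multifrequency_le F hD1 hδ n0 (2 * L)
    (fun n ξ => ∑ p ∈ blockSet y K, Lhat χ y b (2 ^ (n0 + n)) p.2 p.1 ξ) G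
    (fun n => BddMeas.sum _ fun p _ => bddMeas_Lhat hχc hχr y b _ _ _) ?_ ?_ ?_ ?_
  · refine BddMeas.sum _ fun p _ => ((bddMeas_const _).mul
      (bddMeas_cutoff hχc hχr (by fun_prop))).mul ⟨?_, 1, fun ξ => ?_⟩
    · exact Measurable.ite (measurableSet_le (by fun_prop) measurable_const) measurable_const
        measurable_const
    · dsimp only
      split_ifs <;> simp
  · intro ξ
    rcases exists_unique_support hχ0 hy hK ξ with h | ⟨p₀, hp₀, -, h⟩
    · rw [hG]; dsimp only
      rw [Finset.sum_eq_zero fun p hp => by rw [h p hp]; simp, norm_zero]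
      exact hδ
    · rw [hG]; dsimp only
      rw [Finset.sum_eq_single_of_mem p₀ hp₀ fun p hp hne => by rw [h p hp hne]; simp]
      split_ifs
      · rw [mul_one]; exact hκ p₀ hp₀ ξ
      · simpa using hδ
  · have h1 : (4 * m.factorial : ℝ) ≤ 2 ^ 2 ^ (2 * L) := by
      exact_mod_cast four_mul_factorial_le hL1 hmL
    have h2 : (y : ℝ) ≤ 2 ^ n0 := by
      exact_mod_cast (Nat.le_self_pow (by norm_num : 2 ≠ 0) y).trans hn0.le
    rw [hD, pow_add]; push_cast
    calc (4 : ℝ) * (y * m.factorial) = y * (4 * m.factorial) := by ring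
      _ ≤ _ := by gcongr
  · intro ξ
    rcases exists_unique_support hχ0 hy hK ξ with h | ⟨p₀, hp₀, hs, h⟩
    · refine ⟨0, 1, 0, le_rfl, by exact_mod_cast Nat.one_le_two_pow, by simpa using hδ, by simp,
        fun n => ?_, fun x => ?_⟩
      · rw [zero_mul]
        refine Finset.sum_eq_zero fun p hp => ?_
        unfold Lhat
        rw [h p hp]; simp
      · rw [hG]; dsimp only
        rw [Finset.sum_eq_zero fun p hp => by rw [h p hp]; simp]
        simp
    · have hp := (mem_blockSet hy hK p₀).mp hp₀
      have h0 := hgt_ne_zero hK hp.2.1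
      have hl1 : (1 : ℝ) ≤ Nat.lcm y p₀.1 := by
        exact_mod_cast Nat.lcm_pos hy hp.1.1
      refine ⟨Ups y b (p₀.2 : ℤ) p₀.1 *
        ((χ ((Nat.lcm y p₀.1 : ℝ) ^ 2 * (ξ - (p₀.2 : ℝ) / (p₀.1 : ℝ))) : ℝ) : ℂ),
        Nat.lcm y p₀.1, ξ - (p₀.2 : ℝ) / (p₀.1 : ℝ), Nat.lcm_pos hy hp.1.1, ?_, hκ p₀ hp₀ ξ, ?_,
        fun n => ?_, fun x => ?_⟩
      · rw [y_mul_hgt h0]; push_cast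
        refine mul_le_two_pow (hK.trans hp.2.1) (by exact_mod_cast hn0.le) ?_
        exact (pow_le_pow_left₀ (by positivity) hp.2.2.le 10).trans hK0
      · refine le_trans ?_ hs
        gcongr
        nlinarith
      · rw [Finset.sum_eq_single_of_mem p₀ hp₀ fun p hp hne => by
          unfold Lhat; rw [h p hp hne]; simp]
        unfold Lhat; ring
      · rw [hG]; dsimp only
        rw [Finset.sum_eq_single_of_mem p₀ hp₀ fun p hp hne => by rw [h p hp hne]; simp]
        obtain ⟨c, hc⟩ := hdvd p₀ hp₀
        have hq : (p₀.1 : ℝ) ≠ 0 := by exact_mod_cast (by omega : p₀.1 ≠ 0)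
        have hM : Mhat x (D * ξ) = Mhat x (D * (ξ - (p₀.2 : ℝ) / (p₀.1 : ℝ))) := by
          rw [← Mhat_add_int x (D * (ξ - (p₀.2 : ℝ) / (p₀.1 : ℝ))) ((c * p₀.2 : ℕ) : ℤ)]
          congr 1
          rw [hc]; push_cast
          field_simp
          ring
        rw [hM]
        split_ifs <;> ring

end Cutoff

section Assembly

variable {χ : ℝ → ℝ}

lemma bddMeas_blockMult (hχc : Continuous χ) (hχr : ∀ x : ℝ, χ x ∈ Set.Icc (0 : ℝ) 1)
    (y : ℕ) (b : ℤ) (K : ℝ) (n : ℕ) : BddMeas (blockMult χ y b K n) :=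
  BddMeas.sum _ fun _ _ => bddMeas_Lhat hχc hχr y b _ _ _

/-- The maximal estimate over the boundedly many scales at which the block is incomplete. -/
lemma l2norm_iSup_partial_block_le (hχc : Continuous χ) (hχr : ∀ x : ℝ, χ x ∈ Set.Icc (0 : ℝ) 1)
    (hχ0 : ∀ x : ℝ, x ∉ Set.Icc (-(1/4) : ℝ) (1/4) → χ x = 0)
    {y L : ℕ} {b : ℤ} (hy : 1 ≤ y) (hb : Int.gcd b y = 1) {K : ℝ} (hK : 1 ≤ K)
    (hL : 2 * K ≤ 2 ^ L) (F : Finset ℤ) :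
    l2norm (fun x => ⨆ n : ℕ, ‖fcoef (fun ξ =>
        (if y ^ 2 < 2 ^ n ∧ K ^ 10 ≤ 2 ^ n ∧ (2 : ℝ) ^ n < (2 * K) ^ 10 then
          blockMult χ y b K n ξ else 0) * expSum F ξ) x‖ₑ) ≤
      ENNReal.ofReal (20 * ((L + 1) / K)) * (F.card : ℝ≥0∞) ^ ((1 : ℝ) / 2) := by
  have hδ : 0 ≤ ((L : ℝ) + 1) / K := by positivity
  refine l2norm_iSup_fcoef_le F _ (fun n => ?_) _ fun ξ => ?_
  · split_ifs
    · exact bddMeas_blockMult hχc hχr y b K n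
    · exact bddMeas_zero
  · have hex : ∃ n : ℕ, K ^ 10 ≤ (2 : ℝ) ^ n :=
      (pow_unbounded_of_one_lt (K ^ 10) (by norm_num : (1 : ℝ) < 2)).imp fun _ h => h.le
    classical
    set n1 := Nat.find hex with hn1
    have hn1s : K ^ 10 ≤ (2 : ℝ) ^ n1 := Nat.find_spec hex
    rw [tsum_eq_sum (s := Finset.Ico n1 (n1 + 10))]
    · refine (Finset.sum_le_card_nsmul _ _ (ENNReal.ofReal (2 * ((L + 1) / K))) fun n _ => ?_).trans
        (le_of_eq ?_)
      · rw [← ofReal_norm]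
        refine ENNReal.ofReal_le_ofReal ?_
        split_ifs with h
        · exact norm_blockMult_le hχr hχ0 hy hb hK hL h.1 ξ
        · simpa using hδ
      · rw [Nat.card_Ico, nsmul_eq_mul, show n1 + 10 - n1 = 10 by omega,
          ← ENNReal.ofReal_natCast, ← ENNReal.ofReal_mul (by positivity)]
        congr 1
        push_cast; ring
    · intro n hn
      rw [if_neg, enorm_zero]
      rintro ⟨-, h1, h2⟩
      refine hn (Finset.mem_Ico.mpr ⟨Nat.find_min' hex h1, ?_⟩)
      by_contra h
      have h3 : (2 : ℝ) ^ (n1 + 10) ≤ 2 ^ n := pow_le_pow_right₀ (by norm_num) (by omega)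
      rw [pow_add] at h3
      rw [mul_pow] at h2
      linarith [mul_le_mul_of_nonneg_right hn1s (by positivity : (0 : ℝ) ≤ 2 ^ 10),
        mul_comm ((2 : ℝ) ^ 10) (K ^ 10)]

lemma l2norm_iSup_block_le (hχc : Continuous χ) (hχr : ∀ x : ℝ, χ x ∈ Set.Icc (0 : ℝ) 1)
    (hχ0 : ∀ x : ℝ, x ∉ Set.Icc (-(1/4) : ℝ) (1/4) → χ x = 0)
    {y L : ℕ} {b : ℤ} (hy : 1 ≤ y) (hb : Int.gcd b y = 1) {K : ℝ} (hK : 1 ≤ K)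
    (hL : 2 * K ≤ 2 ^ L) (F : Finset ℤ) :
    l2norm (fun x => ⨆ (n : ℕ) (_ : y ^ 2 < 2 ^ n),
        ‖fcoef (fun ξ => blockMult χ y b K n ξ * expSum F ξ) x‖ₑ) ≤
      ENNReal.ofReal (900 * ((L + 1) ^ 2 / K)) * (F.card : ℝ≥0∞) ^ ((1 : ℝ) / 2) := by
  have hK0 : 0 < K := by linarith
  have hex : ∃ n : ℕ, y ^ 2 < 2 ^ n ∧ (2 * K) ^ 10 ≤ (2 : ℝ) ^ n := by
    obtain ⟨n, hn⟩ := pow_unbounded_of_one_lt ((y : ℝ) ^ 2 + (2 * K) ^ 10)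
      (by norm_num : (1 : ℝ) < 2)
    refine ⟨n, ?_, ?_⟩
    · have : (y : ℝ) ^ 2 < 2 ^ n := by linarith [show 0 ≤ (2 * K) ^ 10 by positivity]
      exact_mod_cast this
    · linarith [sq_nonneg (y : ℝ)]
  classical
  set n0 := Nat.find hex with hn0
  obtain ⟨hs1, hs2⟩ : y ^ 2 < 2 ^ n0 ∧ (2 * K) ^ 10 ≤ (2 : ℝ) ^ n0 := Nat.find_spec hex
  have hfull : ∀ n, ∀ ξ, (2 * K) ^ 10 ≤ (2 : ℝ) ^ n → blockMult χ y b K n ξ =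
      ∑ p ∈ blockSet y K, Lhat χ y b (2 ^ n) p.2 p.1 ξ := by
    intro n ξ hn
    unfold blockMult
    rw [Finset.filter_true_of_mem]
    intro p hp
    rw [mem_blockSet hy hK] at hp
    exact hp.2.2.le.trans ((le_two_pow_rpow_iff (by positivity) n).mpr hn)
  have hempty : ∀ n, ∀ ξ, (2 : ℝ) ^ n < K ^ 10 → blockMult χ y b K n ξ = 0 := by
    intro n ξ hn
    unfold blockMult
    rw [Finset.filter_false_of_mem, Finset.sum_empty]
    intro p hp h
    rw [mem_blockSet hy hK] at hp
    exact absurd ((le_two_pow_rpow_iff hK0.le n).mp (hp.2.1.trans h)) (not_le.mpr hn)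
  have h1 := l2norm_iSup_partial_block_le hχc hχr hχ0 hy hb hK hL F
  have h2 := l2norm_iSup_full_block_le hχc hχr hχ0 hy hb hK hL hs1 hs2 F
  have hmain : l2norm (fun x => ⨆ (n : ℕ) (_ : y ^ 2 < 2 ^ n),
      ‖fcoef (fun ξ => blockMult χ y b K n ξ * expSum F ξ) x‖ₑ) ≤ _ :=
    (l2norm_mono fun x => ?_).trans ((l2norm_add_le _ _).trans (add_le_add h1 h2))
  · refine hmain.trans ?_
    rw [← add_mul, ← ENNReal.ofReal_add (by positivity) (by positivity)]
    gcongr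
    push_cast
    rw [mul_div_assoc', mul_div_assoc', mul_div_assoc', ← add_div]
    gcongr
    nlinarith [show (0 : ℝ) ≤ L by positivity]
  · refine iSup_le fun n => iSup_le fun hn => ?_
    rcases lt_or_ge ((2 : ℝ) ^ n) (K ^ 10) with hlt | hge
    · simp [hempty n _ hlt, fcoef]
    · rcases lt_or_ge ((2 : ℝ) ^ n) ((2 * K) ^ 10) with hlt' | hge'
      · refine le_trans ?_ le_self_add
        refine le_trans (le_of_eq ?_) (le_iSup _ n)
        simp [hn, hge, hlt']
      · refine le_trans ?_ le_add_self
        obtain ⟨k, rfl⟩ := Nat.exists_eq_add_of_le (Nat.find_min' hex ⟨hn, hge'⟩)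
        refine le_trans (le_of_eq ?_) (le_iSup _ k)
        simp only [hfull _ _ hge']
        rfl

/-- Convolution with the indicator of `F` is multiplication by `expSum F` on the Fourier side. -/
lemma sum_fcoef_sub {G : ℝ → ℂ} (hG : BddMeas G) (F : Finset ℤ) (x : ℤ) :
    ∑ z ∈ F, fcoef G (x - z) = fcoef (fun ξ => G ξ * expSum F ξ) x := by
  have h1 : ∀ z, fcoef G (x - z) = fcoef (fun ξ => G ξ * e2pi (-((z : ℝ) * ξ))) x := by
    intro z
    unfold fcoef
    congr 1
    funext ξ
    rw [mul_assoc, ← e2pi_add]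
    congr 2
    push_cast; ring
  simp only [h1]
  rw [← fcoef_sum F (fun z _ => hG.mul (bddMeas_e2pi (by fun_prop)))]
  congr 1
  funext ξ
  rw [expSum, Finset.mul_sum]

lemma HiConv_eq (hχc : Continuous χ) (hχr : ∀ x : ℝ, χ x ∈ Set.Icc (0 : ℝ) 1)
    {y : ℕ} (hy : 1 ≤ y) (b : ℤ) (n : ℕ) {Q : ℝ} (hQ : 1 ≤ Q) (F : Finset ℤ) (x : ℤ) :
    HiConv χ y b (2 ^ n) Q F x = ∑ j ∈ Finset.range (⌈((2 : ℝ) ^ n) ^ ((1 : ℝ) / 10)⌉₊ + 1),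
      fcoef (fun ξ => blockMult χ y b (2 ^ j * Q) n ξ * expSum F ξ) x := by
  set X := ((2 : ℝ) ^ n) ^ ((1 : ℝ) / 10) with hX
  have hQj : ∀ j : ℕ, 1 ≤ 2 ^ j * Q := fun j =>
    one_le_mul_of_one_le_of_one_le (one_le_pow₀ (by norm_num)) hQ
  have hL : ∀ a q, BddMeas (Lhat χ y b (2 ^ n) a q) := bddMeas_Lhat hχc hχr y b _
  set f : ℕ × ℕ → ℂ := fun p => fcoef (fun ξ => Lhat χ y b (2 ^ n) p.2 p.1 ξ * expSum F ξ) x with hf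
  set T : ℕ → Finset (ℕ × ℕ) := fun j =>
    (blockSet y (2 ^ j * Q)).filter (fun p => (hgt y p.1 : ℝ) ≤ X) with hT
  have hblock : ∀ j, fcoef (fun ξ => blockMult χ y b (2 ^ j * Q) n ξ * expSum F ξ) x =
      ∑ p ∈ T j, f p := by
    intro j
    rw [hf, ← fcoef_sum _ fun p _ => (hL _ _).mul (bddMeas_expSum F)]
    congr 1
    funext ξ
    rw [blockMult, Finset.sum_mul]
  simp only [hblock]
  have hdisj : ∀ i j : ℕ, i < j → Disjoint (T i) (T j) := by
    intro i j hij
    rw [Finset.disjoint_left]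
    intro p hp hp'
    rw [hT, Finset.mem_filter, mem_blockSet hy (hQj _)] at hp hp'
    have h1 : (2 : ℝ) ^ (i + 1) * Q ≤ 2 ^ j * Q := by
      gcongr
      · norm_num
      · omega
    rw [pow_succ] at h1
    linarith [hp.1.2.2, hp'.1.2.1]
  rw [← Finset.sum_biUnion fun i _ j _ hij => by
    rcases lt_or_gt_of_ne hij with h | h
    · exact hdisj i j h
    · exact (hdisj j i h).symm]
  unfold HiConv HiK
  rw [Finset.sum_comm]
  have hz : ∀ q a, ∑ z ∈ F, Lker χ y b ((2 ^ n : ℕ) : ℝ) a q (x - z) = f (q, a) := by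
    intro q a
    have := sum_fcoef_sub (hL a q) F x
    push_cast
    exact this
  have hcomm : ∀ q, ∑ z ∈ F, ∑ a ∈ (Finset.Icc 1 q).filter (fun a : ℕ => Nat.gcd a q = 1),
      Lker χ y b ((2 ^ n : ℕ) : ℝ) a q (x - z) =
      ∑ a ∈ (Finset.Icc 1 q).filter (fun a : ℕ => Nat.gcd a q = 1), f (q, a) := by
    intro q
    rw [Finset.sum_comm]
    exact Finset.sum_congr rfl fun a _ => hz q a
  rw [Finset.sum_congr rfl fun q _ => hcomm q]
  rw [Finset.sum_sigma']
  refine Finset.sum_bij (fun p _ => (p.1, p.2)) ?_ ?_ ?_ ?_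
  · rintro ⟨q, a⟩ hp
    simp only [Finset.mem_sigma, Finset.mem_filter, Finset.mem_Icc] at hp
    obtain ⟨⟨⟨h1, -⟩, h2, h3⟩, ⟨h4, h5⟩, h6⟩ := hp
    push_cast at h3
    obtain ⟨j, hj1, hj2⟩ := exists_nat_pow_near (x := (hgt y q : ℝ) / Q) (y := 2)
      (by rwa [le_div_iff₀ (by linarith), one_mul]) (by norm_num)
    rw [le_div_iff₀ (by linarith)] at hj1
    rw [div_lt_iff₀ (by linarith), pow_succ] at hj2
    rw [Finset.mem_biUnion]
    refine ⟨j, ?_, ?_⟩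
    · rw [Finset.mem_range, Nat.lt_succ_iff]
      have a1 : (j : ℝ) ≤ 2 ^ j := by exact_mod_cast Nat.lt_two_pow_self.le
      have a2 : (2 : ℝ) ^ j ≤ 2 ^ j * Q := le_mul_of_one_le_right (by positivity) hQ
      exact Nat.cast_le.mp ((a1.trans (a2.trans (hj1.trans h3))).trans (Nat.le_ceil _))
    · rw [hT, Finset.mem_filter, mem_blockSet hy (hQj _)]
      exact ⟨⟨⟨h1, h4, h5, h6⟩, hj1, by linarith⟩, h3⟩
  · rintro ⟨q, a⟩ _ ⟨q', a'⟩ _ h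
    simp only [Prod.mk.injEq] at h
    obtain ⟨rfl, rfl⟩ := h
    rfl
  · rintro ⟨q, a⟩ hp
    rw [Finset.mem_biUnion] at hp
    obtain ⟨j, -, hp⟩ := hp
    rw [hT, Finset.mem_filter, mem_blockSet hy (hQj _)] at hp
    obtain ⟨⟨⟨h1, h4, h5, h6⟩, h7, -⟩, h8⟩ := hp
    refine ⟨⟨q, a⟩, ?_, rfl⟩
    simp only [Finset.mem_sigma, Finset.mem_filter, Finset.mem_Icc]
    have hQle : Q ≤ 2 ^ j * Q := le_mul_of_one_le_left (by linarith) (one_le_pow₀ (by norm_num))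
    refine ⟨⟨⟨h1, ?_⟩, hQle.trans h7, by push_cast; exact h8⟩, ⟨h4, h5⟩, h6⟩
    refine (le_mul_hgt hy (hgt_ne_zero (hQj _) h7)).trans (Nat.mul_le_mul_left y ?_)
    push_cast
    exact Nat.cast_le.mp (h8.trans (Nat.le_ceil _))
  · rintro ⟨q, a⟩ _
    rfl

end Assembly

lemma summable_add_one_sq_mul_geometric :
    Summable fun j : ℕ => ((j : ℝ) + 1) ^ 2 * (1 / 2) ^ j := by
  have h := (summable_nat_add_iff 1).mpr
    (summable_pow_mul_geometric_of_norm_lt_one 2 (r := (1 / 2 : ℝ)) (by norm_num))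
  refine (h.mul_left 2).congr fun j => ?_
  push_cast
  ring

lemma exists_log_scale_le {ε : ℝ} (hε : 0 < ε) {Q : ℝ} (hQ : 1 ≤ Q) :
    ∃ L : ℕ, 2 * Q ≤ 2 ^ L ∧ ((L : ℝ) + 1) ^ 2 ≤ (3 + 4 / ε) ^ 2 * Q ^ ε := by
  have hQ0 : 0 < Q := by linarith
  refine ⟨⌈Real.logb 2 (2 * Q)⌉₊, ?_, ?_⟩
  · calc 2 * Q = (2 : ℝ) ^ Real.logb 2 (2 * Q) :=
          (Real.rpow_logb (by norm_num) (by norm_num) (by positivity)).symm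
      _ ≤ (2 : ℝ) ^ ((⌈Real.logb 2 (2 * Q)⌉₊ : ℕ) : ℝ) :=
          Real.rpow_le_rpow_of_exponent_le (by norm_num) (Nat.le_ceil _)
      _ = _ := Real.rpow_natCast _ _
  · have h0 : 0 ≤ Real.logb 2 (2 * Q) := Real.logb_nonneg (by norm_num) (by linarith)
    have h1 := (Nat.ceil_lt_add_one h0).le
    have h2 : Real.logb 2 (2 * Q) = 1 + Real.logb 2 Q := by
      rw [Real.logb_mul (by norm_num) hQ0.ne', Real.logb_self_eq_one (by norm_num)]
    have hlog : 0 ≤ Real.log Q := Real.log_nonneg hQ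
    have h3 : Real.logb 2 Q ≤ 2 * Real.log Q := by
      rw [Real.logb, div_le_iff₀ (Real.log_pos (by norm_num))]
      nlinarith [Real.log_two_gt_d9]
    have h4 := Real.log_le_rpow_div hQ0.le (half_pos hε)
    have h5 : 1 ≤ Q ^ (ε / 2) := Real.one_le_rpow hQ (by positivity)
    have h6 : (⌈Real.logb 2 (2 * Q)⌉₊ : ℝ) + 1 ≤ (3 + 4 / ε) * Q ^ (ε / 2) := by
      have e : 2 * (Q ^ (ε / 2) / (ε / 2)) = 4 / ε * Q ^ (ε / 2) := by field_simp; ring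
      linarith
    calc _ ≤ ((3 + 4 / ε) * Q ^ (ε / 2)) ^ 2 := by gcongr
      _ = _ := by
        rw [mul_pow, ← Real.rpow_natCast (Q ^ (ε / 2)), ← Real.rpow_mul hQ0.le]
        norm_num

theorem high_term_maximal (χ : ℝ → ℝ) (hχs : ContDiff ℝ (⊤ : ℕ∞) χ)
    (hχr : ∀ x : ℝ, χ x ∈ Set.Icc (0 : ℝ) 1)
    (hχ1 : ∀ x ∈ Set.Icc (-(1/16) : ℝ) (1/16), χ x = 1)
    (hχ0 : ∀ x : ℝ, x ∉ Set.Icc (-(1/4) : ℝ) (1/4) → χ x = 0) :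
    ∀ ε : ℝ, 0 < ε →
      ∃ C : ℝ, 0 < C ∧
        ∀ y : ℕ, 1 ≤ y →
          ∃ N0 : ℕ,
            ∀ b : ℤ, Int.gcd b y = 1 →
              ∀ Q : ℝ, 1 ≤ Q →
                ∀ F : Finset ℤ,
                  (∑' x : ℤ,
                      (⨆ (n : ℕ)
                          (_ : N0 < 2 ^ n ∧ Q ≤ ((2 ^ n : ℕ) : ℝ) ^ ((1:ℝ)/10)),
                        (‖HiConv χ y b (2 ^ n) Q F x‖₊ : ℝ≥0∞)) ^ (2:ℝ)) ^ ((1:ℝ)/2) ≤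
                    ENNReal.ofReal (C * Q ^ (-1 + ε) * (F.card : ℝ) ^ ((1:ℝ)/2)) := by
  intro ε hε
  have hχc := hχs.continuous
  set S : ℝ := ∑' j : ℕ, ((j : ℝ) + 1) ^ 2 * (1 / 2) ^ j with hS
  have hS0 : 0 ≤ S := tsum_nonneg fun j => by positivity
  refine ⟨900 * (3 + 4 / ε) ^ 2 * (S + 1), by positivity, fun y hy => ⟨y ^ 2, ?_⟩⟩
  intro b hb Q hQ F
  have hQ0 : 0 < Q := by linarith
  obtain ⟨L, hL, hLsq⟩ := exists_log_scale_le hε hQ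
  have hblock : ∀ j : ℕ, l2norm (fun x => ⨆ (n : ℕ) (_ : y ^ 2 < 2 ^ n),
      ‖fcoef (fun ξ => blockMult χ y b (2 ^ j * Q) n ξ * expSum F ξ) x‖ₑ) ≤
      ENNReal.ofReal (900 * (3 + 4 / ε) ^ 2 * Q ^ (-1 + ε) * (((j : ℝ) + 1) ^ 2 * (1 / 2) ^ j)) *
        (F.card : ℝ≥0∞) ^ ((1 : ℝ) / 2) := by
    intro j
    have hK : 1 ≤ 2 ^ j * Q := one_le_mul_of_one_le_of_one_le (one_le_pow₀ (by norm_num)) hQ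
    refine (l2norm_iSup_block_le hχc hχr hχ0 hy hb hK (L := j + L) ?_ F).trans ?_
    · rw [pow_add]
      calc (2 : ℝ) * (2 ^ j * Q) = 2 ^ j * (2 * Q) := by ring
        _ ≤ _ := by gcongr
    · refine mul_le_mul' (ENNReal.ofReal_le_ofReal ?_) le_rfl
      have h1 : (((j + L : ℕ) : ℝ) + 1) ^ 2 ≤ ((j : ℝ) + 1) ^ 2 * ((3 + 4 / ε) ^ 2 * Q ^ ε) := by
        refine le_trans ?_ (mul_le_mul_of_nonneg_left hLsq (by positivity))
        rw [← mul_pow]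
        gcongr
        push_cast
        nlinarith [show (0 : ℝ) ≤ j * L by positivity]
      rw [Real.rpow_add hQ0, Real.rpow_neg_one]
      calc 900 * ((((j + L : ℕ) : ℝ) + 1) ^ 2 / (2 ^ j * Q))
          ≤ 900 * (((j : ℝ) + 1) ^ 2 * ((3 + 4 / ε) ^ 2 * Q ^ ε) / (2 ^ j * Q)) := by gcongr
        _ = _ := by
          rw [one_div, inv_pow]
          field_simp
  have hmono : ∀ x : ℤ, (⨆ (n : ℕ) (_ : y ^ 2 < 2 ^ n ∧ Q ≤ ((2 ^ n : ℕ) : ℝ) ^ ((1:ℝ)/10)),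
      (‖HiConv χ y b (2 ^ n) Q F x‖₊ : ℝ≥0∞)) ≤
      ∑' j : ℕ, ⨆ (n : ℕ) (_ : y ^ 2 < 2 ^ n),
        ‖fcoef (fun ξ => blockMult χ y b (2 ^ j * Q) n ξ * expSum F ξ) x‖ₑ := by
    intro x
    refine iSup_le fun n => iSup_le fun hn => ?_
    rw [HiConv_eq hχc hχr hy b n hQ F x, ← enorm_eq_nnnorm]
    refine (enorm_sum_le _ _).trans ((ENNReal.sum_le_tsum _).trans (ENNReal.tsum_le_tsum fun j => ?_))
    exact le_iSup₂_of_le n hn.1 le_rfl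
  refine (l2norm_mono hmono).trans ((l2norm_tsum_le _).trans
    ((ENNReal.tsum_le_tsum hblock).trans ?_))
  rw [ENNReal.tsum_mul_right, ← ENNReal.ofReal_tsum_of_nonneg (fun j => by positivity)
    (summable_add_one_sq_mul_geometric.mul_left _), tsum_mul_left, ← hS,
    ENNReal.ofReal_mul (q := (F.card : ℝ) ^ ((1:ℝ)/2)) (by positivity),
    ← ENNReal.ofReal_rpow_of_nonneg (by positivity) (by norm_num), ENNReal.ofReal_natCast]
  refine mul_le_mul' (ENNReal.ofReal_le_ofReal ?_) le_rfl
  have : 0 ≤ 900 * (3 + 4 / ε) ^ 2 * Q ^ (-1 + ε) := by positivity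
  linarith [mul_comm (900 * (3 + 4 / ε) ^ 2 * Q ^ (-1 + ε)) S]

end
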